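/- arXiv:1007.0564 — 2 statements merged into one kernel-verified Lean document; each statement's English description precedes it below -/
import Mathlib

section
/- Let T ∈ S′(ℝ^d) be a tempered distribution. Then there exist q ∈ ℕ with ‖T‖_{−q} := (Σ_{γ∈ℕ^d} (2|γ|+d)^{−2q} T(h_γ)²)^{1/2} < ∞ and a polynomial P with nonnegative coefficients such that for every finite subset F of ℕ^d, every x ∈ ℝ^d, and every φ in the Schwartz space S(ℝ^d), |Σ_{γ∈F} T(h_γ) ∫_{ℝ^d} h_γ(y) φ(y+x) dy| ≤ P(|x|) · ‖T‖_{−q} · |φ|_q. -/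
open MeasureTheory

noncomputable def hermitePoly (n : ℕ) (x : ℝ) : ℝ :=
  (-1 : ℝ) ^ n * Real.exp (x ^ 2 / 2) *
    iteratedDeriv n (fun y : ℝ => Real.exp (-(y ^ 2 / 2))) x

noncomputable def hermiteFun (n : ℕ) (x : ℝ) : ℝ :=
  (Real.sqrt (Real.sqrt (2 * Real.pi) * n.factorial))⁻¹ *
    Real.exp (-(x ^ 2 / 4)) * hermitePoly n x

noncomputable def hermiteFunMulti (d : ℕ) (α : Fin d → ℕ) (x : EuclideanSpace ℝ (Fin d)) : ℝ :=
  ∏ i, hermiteFun (α i) (x i)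

noncomputable def hermCoeff (d : ℕ) (f : EuclideanSpace ℝ (Fin d) → ℝ) (β : Fin d → ℕ) : ℝ :=
  ∫ x, f x * hermiteFunMulti d β x

noncomputable def hermNorm (d n : ℕ) (f : EuclideanSpace ℝ (Fin d) → ℝ) : ℝ :=
  Real.sqrt (∑' β : Fin d → ℕ,
    (((2 * ∑ i, β i) + d : ℕ) : ℝ) ^ (2 * n) * hermCoeff d f β ^ 2)

namespace HB

lemma hermitePoly_eq (n : ℕ) (x : ℝ) :
    hermitePoly n x = Polynomial.aeval x (Polynomial.hermite n) := by
  rw [Polynomial.hermite_eq_deriv_gaussian, hermitePoly, iteratedDeriv_eq_iterate, Real.exp_neg]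
  field_simp

lemma derivative_hermite (n : ℕ) :
    Polynomial.derivative (Polynomial.hermite (n + 1)) = (n + 1 : ℕ) • Polynomial.hermite n := by
  induction n with
  | zero => simp
  | succ n ih =>
    rw [Polynomial.hermite_succ (n + 1), Polynomial.derivative_sub, Polynomial.derivative_mul, ih,
      Polynomial.derivative_smul, Polynomial.hermite_succ n]
    simp
    ring

lemma hermitePoly_succ (n : ℕ) (x : ℝ) : HasDerivAt (hermitePoly n)
    (x * hermitePoly n x - hermitePoly (n + 1) x) x := by
  have h1 : hermitePoly n = fun x => Polynomial.aeval x (Polynomial.hermite n) := by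
    ext x; exact hermitePoly_eq n x
  have h2 := Polynomial.hasDerivAt_aeval (Polynomial.hermite n) x
  rw [h1]
  refine h2.congr_deriv ?_
  simp only [hermitePoly_eq, Polynomial.hermite_succ, map_sub, map_mul, Polynomial.aeval_X]
  ring

/-- three-term recurrence -/
lemma hermitePoly_rec (n : ℕ) (x : ℝ) :
    x * hermitePoly n x = hermitePoly (n + 1) x + n * hermitePoly (n - 1) x := by
  simp only [hermitePoly_eq]
  rw [Polynomial.hermite_succ]
  cases n with
  | zero => simp
  | succ n =>
    rw [derivative_hermite]
    simp

lemma sqrt_fact_succ (n : ℕ) :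
    Real.sqrt (Real.sqrt (2 * Real.pi) * (n + 1).factorial) =
      Real.sqrt (n + 1) * Real.sqrt (Real.sqrt (2 * Real.pi) * n.factorial) := by
  rw [← Real.sqrt_mul (by positivity)]
  congr 1
  rw [Nat.factorial_succ]
  push_cast
  ring

lemma sqrt_fact_pos (n : ℕ) : 0 < Real.sqrt (Real.sqrt (2 * Real.pi) * n.factorial) := by
  positivity

lemma hermiteFun_mul (n : ℕ) (x : ℝ) :
    x * hermiteFun n x = Real.sqrt n * hermiteFun (n - 1) x +
      Real.sqrt (n + 1) * hermiteFun (n + 1) x := by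
  have h := hermitePoly_rec n x
  have hp : (0 : ℝ) < Real.sqrt (n + 1) := by positivity
  have e1 : Real.sqrt (n + 1) * hermiteFun (n + 1) x =
      (Real.sqrt (Real.sqrt (2 * Real.pi) * n.factorial))⁻¹ *
        Real.exp (-(x ^ 2 / 4)) * hermitePoly (n + 1) x := by
    rw [hermiteFun, sqrt_fact_succ]
    have := sqrt_fact_pos n
    field_simp
  have e2 : Real.sqrt n * hermiteFun (n - 1) x =
      (Real.sqrt (Real.sqrt (2 * Real.pi) * n.factorial))⁻¹ *
        Real.exp (-(x ^ 2 / 4)) * (n * hermitePoly (n - 1) x) := by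
    cases n with
    | zero => simp
    | succ n =>
      rw [hermiteFun, sqrt_fact_succ]
      have := sqrt_fact_pos n
      have hp : (0 : ℝ) < Real.sqrt (n + 1) := by positivity
      have hs : Real.sqrt ((n : ℝ) + 1) ^ 2 = n + 1 := Real.sq_sqrt (by positivity)
      simp only [Nat.add_sub_cancel]
      push_cast
      field_simp
      rw [hs]
  rw [e1, e2, ← mul_add, add_comm _ (hermitePoly (n + 1) x), ← h, hermiteFun]
  ring

lemma hermiteFun_hasDerivAt (n : ℕ) (x : ℝ) :
    HasDerivAt (hermiteFun n) (x / 2 * hermiteFun n x - Real.sqrt (n + 1) * hermiteFun (n + 1) x)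
      x := by
  have e1 : Real.sqrt (n + 1) * hermiteFun (n + 1) x =
      (Real.sqrt (Real.sqrt (2 * Real.pi) * n.factorial))⁻¹ *
        Real.exp (-(x ^ 2 / 4)) * hermitePoly (n + 1) x := by
    rw [hermiteFun, sqrt_fact_succ]
    have := sqrt_fact_pos n
    have hp : (0 : ℝ) < Real.sqrt (n + 1) := by positivity
    field_simp
  have h1 : HasDerivAt (fun x : ℝ => Real.exp (-(x ^ 2 / 4)))
      (Real.exp (-(x ^ 2 / 4)) * (-(2 * x / 4))) x := by
    have := (((hasDerivAt_pow 2 x).div_const 4).neg).exp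
    simpa using this
  have h2 := (h1.mul (hermitePoly_succ n x)).const_mul
    (Real.sqrt (Real.sqrt (2 * Real.pi) * n.factorial))⁻¹
  rw [e1]
  have e3 : hermiteFun n = fun y => (Real.sqrt (Real.sqrt (2 * Real.pi) * n.factorial))⁻¹ *
      ((fun x => Real.exp (-(x ^ 2 / 4))) * hermitePoly n) y := by
    ext y; simp [hermiteFun]; ring
  rw [e3]
  refine h2.congr_deriv ?_
  simp; ring

lemma iteratedDeriv_real_complex (n : ℕ) : ∀ x : ℝ,
    ((iteratedDeriv n (fun y : ℝ => Real.exp (-(y ^ 2 / 2))) x : ℝ) : ℂ) =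
      iteratedDeriv n (fun z : ℂ => Complex.exp (-(z ^ 2 / 2))) x := by
  induction n with
  | zero => intro x; simp
  | succ n ih =>
    intro x
    have hC : ContDiff ℂ ⊤ (fun z : ℂ => Complex.exp (-(z ^ 2 / 2))) := by fun_prop
    have hR : ContDiff ℝ ⊤ (fun y : ℝ => Real.exp (-(y ^ 2 / 2))) := by fun_prop
    rw [iteratedDeriv_succ, iteratedDeriv_succ]
    have d1 : HasDerivAt (iteratedDeriv n (fun z : ℂ => Complex.exp (-(z ^ 2 / 2))))
        (deriv (iteratedDeriv n (fun z : ℂ => Complex.exp (-(z ^ 2 / 2)))) x) (x : ℂ) :=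
      ((hC.differentiable_iteratedDeriv n (by exact_mod_cast WithTop.coe_lt_top _)) _).hasDerivAt
    have d2 : HasDerivAt (iteratedDeriv n (fun y : ℝ => Real.exp (-(y ^ 2 / 2))))
        (deriv (iteratedDeriv n (fun y : ℝ => Real.exp (-(y ^ 2 / 2)))) x) x :=
      ((hR.differentiable_iteratedDeriv n (by exact_mod_cast WithTop.coe_lt_top _)) _).hasDerivAt
    have d3 := d1.comp_ofReal
    have d4 := d2.ofReal_comp
    refine HasDerivAt.unique ?_ d3
    have e : (fun y : ℝ => iteratedDeriv n (fun z : ℂ => Complex.exp (-(z ^ 2 / 2))) (y : ℂ)) =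
        fun y : ℝ => ((iteratedDeriv n (fun y : ℝ => Real.exp (-(y ^ 2 / 2))) y : ℝ) : ℂ) := by
      ext y; exact (ih y).symm
    rw [e]
    exact d4

lemma gaussian_deriv_bound (n : ℕ) (x r : ℝ) (hr : 0 < r) :
    Real.exp (x ^ 2 / 4) * |iteratedDeriv n (fun y : ℝ => Real.exp (-(y ^ 2 / 2))) x| ≤
      n.factorial * Real.exp (r ^ 2 / 2) / r ^ n := by
  have h := Complex.norm_iteratedDeriv_le_of_forall_mem_sphere_norm_le (c := (x : ℂ))
    (f := fun z : ℂ => Complex.exp (-(z ^ 2 / 2)))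
    (C := Real.exp (r ^ 2 / 2 - x ^ 2 / 4)) n hr
    (Differentiable.diffContOnCl (by fun_prop)) ?_
  · rw [← iteratedDeriv_real_complex, Complex.norm_real, Real.norm_eq_abs] at h
    calc _ ≤ Real.exp (x ^ 2 / 4) * (n.factorial * Real.exp (r ^ 2 / 2 - x ^ 2 / 4) / r ^ n) := by
          gcongr
      _ = _ := by
          rw [Real.exp_sub]
          field_simp
  · intro z hz
    rw [Complex.norm_exp]
    apply Real.exp_le_exp.2
    have hz2 : (z.re - x) ^ 2 + z.im ^ 2 = r ^ 2 := by
      rw [mem_sphere_iff_norm] at hz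
      have := Complex.sq_norm (z - x)
      rw [hz, Complex.normSq_apply] at this
      simp at this
      rw [this]; ring
    have : (-(z ^ 2 / 2)).re = -((z.re ^ 2 - z.im ^ 2) / 2) := by
      simp [pow_two]
    rw [this]
    nlinarith [sq_nonneg (z.re - x / 2)]

lemma factorial_bound (n : ℕ) :
    (n + 1).factorial * Real.exp (n + 1 : ℕ) ≤
      Real.exp 1 * (n + 1 : ℕ) * ((n + 1 : ℕ) : ℝ) ^ (n + 1) := by
  induction n with
  | zero => simp
  | succ n ih =>
    have h0 : (0 : ℝ) < (n + 1 : ℕ) := by positivity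
    have key : Real.exp 1 * ((n + 1 : ℕ) : ℝ) ^ (n + 2) ≤ ((n + 2 : ℕ) : ℝ) ^ (n + 2) := by
      have h1 : ((n + 1 : ℕ) : ℝ) / (n + 2 : ℕ) ≤ Real.exp (-(1 / (n + 2 : ℕ))) := by
        have := Real.add_one_le_exp (-(1 / ((n + 2 : ℕ) : ℝ)))
        refine le_trans (le_of_eq ?_) this
        push_cast
        field_simp
        ring
      have h2 := pow_le_pow_left₀ (by positivity) h1 (n + 2)
      rw [← Real.exp_nat_mul, div_pow, div_le_iff₀ (by positivity)] at h2
      have h3 : ((n + 2 : ℕ) : ℝ) * -(1 / (n + 2 : ℕ)) = -1 := by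
        have : ((n + 2 : ℕ) : ℝ) ≠ 0 := by positivity
        field_simp
      rw [h3] at h2
      calc _ ≤ Real.exp 1 * (Real.exp (-1) * ((n + 2 : ℕ) : ℝ) ^ (n + 2)) := by gcongr
        _ = _ := by rw [← mul_assoc, ← Real.exp_add]; simp
    calc ((n + 1 + 1).factorial : ℝ) * Real.exp (n + 1 + 1 : ℕ)
        = (n + 2 : ℕ) * Real.exp 1 * ((n + 1).factorial * Real.exp (n + 1 : ℕ)) := by
          rw [Nat.factorial_succ (n + 1)]
          push_cast
          rw [Real.exp_add _ 1]
          ring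
      _ ≤ (n + 2 : ℕ) * Real.exp 1 *
            (Real.exp 1 * (n + 1 : ℕ) * ((n + 1 : ℕ) : ℝ) ^ (n + 1)) := by gcongr
      _ = Real.exp 1 * (n + 2 : ℕ) * (Real.exp 1 * ((n + 1 : ℕ) : ℝ) ^ (n + 2)) := by ring
      _ ≤ Real.exp 1 * (n + 2 : ℕ) * ((n + 2 : ℕ) : ℝ) ^ (n + 2) := by gcongr

lemma hermiteFun_bound (n : ℕ) (x : ℝ) : |hermiteFun n x| ≤ 2 * (n + 1) := by
  have hpi : 1 ≤ Real.sqrt (2 * Real.pi) := by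
    rw [Real.one_le_sqrt]; nlinarith [Real.pi_gt_three]
  have hs : Real.sqrt (n.factorial) ≤ Real.sqrt (Real.sqrt (2 * Real.pi) * n.factorial) := by
    apply Real.sqrt_le_sqrt
    have : (0 : ℝ) ≤ n.factorial := by positivity
    nlinarith
  have hexp : Real.exp (-(x ^ 2 / 4)) * Real.exp (x ^ 2 / 2) = Real.exp (x ^ 2 / 4) := by
    rw [← Real.exp_add]; congr 1; ring
  have hf : |hermiteFun n x| ≤ (Real.sqrt (n.factorial))⁻¹ *
      (Real.exp (x ^ 2 / 4) * |iteratedDeriv n (fun y : ℝ => Real.exp (-(y ^ 2 / 2))) x|) := by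
    rw [hermiteFun, hermitePoly]
    simp only [abs_mul, abs_inv, abs_pow, abs_neg, abs_one, one_pow, one_mul, Real.abs_exp,
      abs_of_nonneg (Real.sqrt_nonneg _)]
    rw [mul_assoc, ← mul_assoc (Real.exp _), hexp]
    gcongr
  have hfp : 0 < Real.sqrt (n.factorial) := by positivity
  cases n with
  | zero =>
    refine hf.trans ?_
    have := gaussian_deriv_bound 0 x 1 one_pos
    have h2 : Real.exp (1 ^ 2 / 2) ≤ 2 := by
      have h3 : Real.exp (1 / 2) ^ 2 = Real.exp 1 := by
        rw [← Real.exp_nat_mul]; norm_num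
      have := Real.exp_one_lt_d9
      norm_num
      nlinarith [Real.exp_pos (1 / 2)]
    simp at this ⊢
    simp at h2
    linarith
  | succ m =>
    refine hf.trans ?_
    set N : ℕ := m + 1 with hN
    have hNpos : (0 : ℝ) < N := by positivity
    have h1 := gaussian_deriv_bound N x (Real.sqrt N) (by positivity)
    rw [Real.sq_sqrt hNpos.le] at h1
    have hfb := factorial_bound m
    rw [← hN] at hfb
    calc _ ≤ (Real.sqrt (N.factorial))⁻¹ *
          (N.factorial * Real.exp (N / 2) / Real.sqrt N ^ N) := by gcongr
      _ = Real.sqrt (N.factorial) * Real.exp (N / 2) / Real.sqrt N ^ N := by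
          have : (N.factorial : ℝ) = Real.sqrt (N.factorial) ^ 2 :=
            (Real.sq_sqrt (by positivity)).symm
          field_simp
          rw [← this]
      _ ≤ 2 * (N + 1) := by
          rw [div_le_iff₀ (by positivity)]
          apply le_of_sq_le_sq _ (by positivity)
          rw [mul_pow, Real.sq_sqrt (by positivity), ← Real.exp_nat_mul, mul_pow, ← pow_mul,
            mul_comm N 2, pow_mul, Real.sq_sqrt hNpos.le]
          have e : ((2 : ℕ) : ℝ) * (N / 2) = N := by push_cast; ring
          rw [e]
          refine hfb.trans ?_
          gcongr
          have := Real.exp_one_lt_d9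
          nlinarith

end HB

namespace HB

/-- lower the `i`-th index -/
def dn {d : ℕ} (γ : Fin d → ℕ) (i : Fin d) : Fin d → ℕ := Function.update γ i (γ i - 1)
/-- raise the `i`-th index -/
def up {d : ℕ} (γ : Fin d → ℕ) (i : Fin d) : Fin d → ℕ := Function.update γ i (γ i + 1)
/-- the weight `2|γ|+d` -/
noncomputable def wt (d : ℕ) (γ : Fin d → ℕ) : ℝ := (((2 * ∑ i, γ i) + d : ℕ) : ℝ)

lemma sum_update {d : ℕ} (γ : Fin d → ℕ) (i : Fin d) (n : ℕ) :
    ∑ j, Function.update γ i n j + γ i = ∑ j, γ j + n := by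
  rw [Finset.sum_update_of_mem (Finset.mem_univ i), ← Finset.add_sum_erase _ _ (Finset.mem_univ i),
    Finset.sdiff_singleton_eq_erase]
  ring

lemma wt_up {d : ℕ} (γ : Fin d → ℕ) (i : Fin d) : wt d (up γ i) = wt d γ + 2 := by
  have := sum_update γ i (γ i + 1)
  have h : ∑ j, up γ i j = ∑ j, γ j + 1 := by unfold up; omega
  simp only [wt, h]; push_cast; ring

lemma wt_dn_le {d : ℕ} (γ : Fin d → ℕ) (i : Fin d) : wt d (dn γ i) ≤ wt d γ := by
  have := sum_update γ i (γ i - 1)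
  have h : ∑ j, dn γ i j ≤ ∑ j, γ j := by unfold dn; omega
  simp only [wt]
  exact_mod_cast (by omega)

lemma wt_nonneg {d : ℕ} (γ : Fin d → ℕ) : 0 ≤ wt d γ := by unfold wt; positivity

lemma one_le_wt {d : ℕ} (hd : 0 < d) (γ : Fin d → ℕ) : 1 ≤ wt d γ := by
  unfold wt; exact_mod_cast (by omega)

lemma idx_le_wt {d : ℕ} (γ : Fin d → ℕ) (i : Fin d) : (γ i : ℝ) + 1 ≤ wt d γ := by
  have hd : 0 < d := i.pos
  have : γ i ≤ ∑ j, γ j := Finset.single_le_sum (f := γ) (fun _ _ => Nat.zero_le _) (Finset.mem_univ i)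
  unfold wt; exact_mod_cast (by omega)

lemma sqrt_le_wt {d : ℕ} (γ : Fin d → ℕ) (i : Fin d) :
    Real.sqrt (γ i + 1) ≤ wt d γ := by
  have h := idx_le_wt γ i
  refine le_trans ?_ h
  rw [Real.sqrt_le_left (by positivity)]
  nlinarith [(Nat.cast_nonneg (γ i) : (0 : ℝ) ≤ γ i)]

lemma sqrt_le_wt' {d : ℕ} (γ : Fin d → ℕ) (i : Fin d) :
    Real.sqrt (γ i) ≤ wt d γ :=
  (Real.sqrt_le_sqrt (by linarith)).trans (sqrt_le_wt γ i)

lemma dn_up {d : ℕ} (γ : Fin d → ℕ) (i : Fin d) : dn (up γ i) i = γ := by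
  simp [dn, up]

lemma up_inj {d : ℕ} (i : Fin d) : Function.Injective (fun γ : Fin d → ℕ => up γ i) := by
  intro a b hab
  have := congrArg (fun γ => dn γ i) hab
  simpa [dn_up] using this

lemma up_dn {d : ℕ} (γ : Fin d → ℕ) (i : Fin d) (h : γ i ≠ 0) : up (dn γ i) i = γ := by
  have : γ i - 1 + 1 = γ i := by omega
  simp [dn, up, this]

lemma multi_update {d : ℕ} (γ : Fin d → ℕ) (i : Fin d) (n : ℕ) (x : EuclideanSpace ℝ (Fin d)) :
    hermiteFunMulti d (Function.update γ i n) x =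
      hermiteFun n (x i) * ∏ j ∈ Finset.univ.erase i, hermiteFun (γ j) (x j) := by
  rw [hermiteFunMulti, ← Finset.mul_prod_erase _ _ (Finset.mem_univ i)]
  congr 1
  · simp
  · apply Finset.prod_congr rfl
    intro j hj
    rw [Function.update_of_ne (Finset.ne_of_mem_erase hj)]

lemma multi_split {d : ℕ} (γ : Fin d → ℕ) (i : Fin d) (x : EuclideanSpace ℝ (Fin d)) :
    hermiteFunMulti d γ x =
      hermiteFun (γ i) (x i) * ∏ j ∈ Finset.univ.erase i, hermiteFun (γ j) (x j) := by
  rw [← multi_update, Function.update_eq_self]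

lemma multi_mul {d : ℕ} (γ : Fin d → ℕ) (i : Fin d) (x : EuclideanSpace ℝ (Fin d)) :
    x i * hermiteFunMulti d γ x = Real.sqrt (γ i) * hermiteFunMulti d (dn γ i) x +
      Real.sqrt (γ i + 1) * hermiteFunMulti d (up γ i) x := by
  rw [dn, up, multi_update, multi_update, multi_split γ i, ← mul_assoc, hermiteFun_mul]
  ring

lemma multi_lineDeriv {d : ℕ} (γ : Fin d → ℕ) (i : Fin d) (x : EuclideanSpace ℝ (Fin d)) :
    lineDeriv ℝ (hermiteFunMulti d γ) x (EuclideanSpace.single i 1) =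
      (Real.sqrt (γ i) * hermiteFunMulti d (dn γ i) x -
      Real.sqrt (γ i + 1) * hermiteFunMulti d (up γ i) x) / 2 := by
  have hm := multi_mul γ i x
  have h1 : (fun t : ℝ => hermiteFunMulti d γ (x + t • EuclideanSpace.single i 1)) =
      fun t : ℝ => hermiteFun (γ i) (x i + t) *
        ∏ j ∈ Finset.univ.erase i, hermiteFun (γ j) (x j) := by
    ext t
    rw [multi_split γ i]
    congr 1
    · simp
    · apply Finset.prod_congr rfl
      intro j hj
      have := Finset.ne_of_mem_erase hj
      simp [this]
  rw [lineDeriv, h1]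
  have h2 : HasDerivAt (hermiteFun (γ i)) (x i / 2 * hermiteFun (γ i) (x i) -
      Real.sqrt (γ i + 1) * hermiteFun (γ i + 1) (x i)) (x i + 0) := by
    rw [add_zero]; exact hermiteFun_hasDerivAt _ _
  have h3 := (h2.comp_const_add (x i) 0).mul_const
    (∏ j ∈ Finset.univ.erase i, hermiteFun (γ j) (x j))
  rw [h3.deriv]
  have e1 : hermiteFunMulti d (up γ i) x = _ := multi_update γ i (γ i + 1) x
  have e2 := multi_split γ i x
  have e3 : hermiteFunMulti d (dn γ i) x = _ := multi_update γ i (γ i - 1) x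
  rw [e1, e2] at hm
  rw [e1]
  linear_combination (1 / 2 : ℝ) * hm

section

open LineDeriv SchwartzMap

lemma h_lineDeriv {d : ℕ} (h : (Fin d → ℕ) → SchwartzMap (EuclideanSpace ℝ (Fin d)) ℝ)
    (hh : ∀ β x, h β x = hermiteFunMulti d β x)
    (γ : Fin d → ℕ) (i : Fin d) :
    ∂_{EuclideanSpace.single i (1 : ℝ)} (h γ) =
      (Real.sqrt (γ i) / 2) • h (dn γ i) - (Real.sqrt (γ i + 1) / 2) • h (up γ i) := by
  ext x
  have e : (h γ : EuclideanSpace ℝ (Fin d) → ℝ) = hermiteFunMulti d γ := by ext x; exact hh γ x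
  rw [SchwartzMap.lineDerivOp_apply, e, multi_lineDeriv]
  simp [hh]
  ring

lemma seminorm_succ {d : ℕ} (k n : ℕ) : ∃ K : ℝ, 0 ≤ K ∧ ∀ f : SchwartzMap (EuclideanSpace ℝ (Fin d)) ℝ,
    SchwartzMap.seminorm ℝ k (n + 1) f ≤
      K * ∑ i : Fin d, SchwartzMap.seminorm ℝ k n (∂_{EuclideanSpace.single i (1 : ℝ)} f) := by
  let L : Fin d → (ℝ →L[ℝ] (EuclideanSpace ℝ (Fin d) →L[ℝ] ℝ)) := fun i =>
    (ContinuousLinearMap.smulRightL ℝ (EuclideanSpace ℝ (Fin d)) ℝ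
      (EuclideanSpace.proj i : EuclideanSpace ℝ (Fin d) →L[ℝ] ℝ))
  refine ⟨∑ i, ‖L i‖, Finset.sum_nonneg fun i _ => norm_nonneg (L i), fun f => ?_⟩
  have hs : ∀ i : Fin d, 0 ≤ SchwartzMap.seminorm ℝ k n (∂_{EuclideanSpace.single i (1 : ℝ)} f) :=
    fun i => apply_nonneg _ _
  have hS : 0 ≤ ∑ i : Fin d, SchwartzMap.seminorm ℝ k n (∂_{EuclideanSpace.single i (1 : ℝ)} f) :=
    Finset.sum_nonneg fun i _ => hs i
  refine SchwartzMap.seminorm_le_bound ℝ k (n + 1) f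
    (mul_nonneg (Finset.sum_nonneg fun i _ => norm_nonneg (L i)) hS) fun x => ?_
  rw [← norm_iteratedFDeriv_fderiv]
  have e : fderiv ℝ f = fun x => ∑ i : Fin d, (L i) ((∂_{EuclideanSpace.single i (1 : ℝ)} f) x) := by
    ext x v
    have hv : v = ∑ i, v i • EuclideanSpace.single i (1 : ℝ) := by
      ext j; simp [Pi.single_apply]
    conv_lhs => rw [hv]
    simp [L, SchwartzMap.lineDerivOp_apply_eq_fderiv]
  have hc : ∀ i : Fin d, ContDiff ℝ n (fun x => (L i) ((∂_{EuclideanSpace.single i (1 : ℝ)} f) x)) :=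
    fun i => (L i).contDiff.comp ((∂_{EuclideanSpace.single i (1 : ℝ)} f).smooth n)
  rw [e, iteratedFDeriv_fun_sum_apply (fun i _ => (hc i).contDiffAt)]
  calc _ ≤ ‖x‖ ^ k * ∑ i, ‖iteratedFDeriv ℝ n
        (fun x => (L i) ((∂_{EuclideanSpace.single i (1 : ℝ)} f) x)) x‖ := by
        gcongr; exact norm_sum_le _ _
    _ ≤ ‖x‖ ^ k * ∑ i, ‖L i‖ * ‖iteratedFDeriv ℝ n
        (⇑(∂_{EuclideanSpace.single i (1 : ℝ)} f : SchwartzMap (EuclideanSpace ℝ (Fin d)) ℝ)) x‖ := by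
        gcongr with i
        exact (L i).norm_iteratedFDeriv_comp_left
          ((∂_{EuclideanSpace.single i (1 : ℝ)} f).smooth n).contDiffAt le_rfl
    _ = ∑ i, ‖L i‖ * (‖x‖ ^ k * ‖iteratedFDeriv ℝ n
        (⇑(∂_{EuclideanSpace.single i (1 : ℝ)} f : SchwartzMap (EuclideanSpace ℝ (Fin d)) ℝ)) x‖) := by
        rw [Finset.mul_sum]; apply Finset.sum_congr rfl; intros; ring
    _ ≤ ∑ i, ‖L i‖ * ∑ j : Fin d, SchwartzMap.seminorm ℝ k n (∂_{EuclideanSpace.single j (1 : ℝ)} f) := by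
        gcongr with i
        refine (SchwartzMap.le_seminorm ℝ k n _ x).trans ?_
        exact Finset.single_le_sum (f := fun j =>
          SchwartzMap.seminorm ℝ k n (∂_{EuclideanSpace.single j (1 : ℝ)} f)) (fun i _ => hs i)
          (Finset.mem_univ i)
    _ = _ := by rw [Finset.sum_mul]

lemma sem_zero_zero {d : ℕ} (h : (Fin d → ℕ) → SchwartzMap (EuclideanSpace ℝ (Fin d)) ℝ)
    (hh : ∀ β x, h β x = hermiteFunMulti d β x)
    (γ : Fin d → ℕ) (x : EuclideanSpace ℝ (Fin d)) :
    |h γ x| ≤ 2 ^ d * wt d γ ^ d := by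
  rw [hh, hermiteFunMulti, Finset.abs_prod]
  calc _ ≤ ∏ i : Fin d, (2 * wt d γ) := by
        apply Finset.prod_le_prod (fun _ _ => abs_nonneg _)
        intro i _
        refine (hermiteFun_bound _ _).trans ?_
        have := idx_le_wt γ i
        linarith
    _ = _ := by simp [mul_pow]

lemma wt_up_le {d : ℕ} (γ : Fin d → ℕ) (i : Fin d) : wt d (up γ i) ≤ 3 * wt d γ := by
  rw [wt_up]; linarith [one_le_wt i.pos γ]

lemma sem_zero {d : ℕ} (h : (Fin d → ℕ) → SchwartzMap (EuclideanSpace ℝ (Fin d)) ℝ)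
    (hh : ∀ β x, h β x = hermiteFunMulti d β x)
    (k : ℕ) : ∃ C : ℝ, ∃ m : ℕ, 0 ≤ C ∧ ∀ γ x, ‖x‖ ^ k * |h γ x| ≤ C * wt d γ ^ m := by
  induction k with
  | zero =>
    exact ⟨2 ^ d, d, by positivity, fun γ x => by simpa using sem_zero_zero h hh γ x⟩
  | succ k ih =>
    obtain ⟨C, m, hC, H⟩ := ih
    refine ⟨∑ _i : Fin d, (C + 3 ^ m * C), m + 1, by positivity, fun γ x => ?_⟩
    have hx : ‖x‖ ≤ ∑ i, |x i| := by
      have hv : x = ∑ i, x i • EuclideanSpace.single i (1 : ℝ) := by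
        ext j; simp [Pi.single_apply]
      conv_lhs => rw [hv]
      refine (norm_sum_le _ _).trans (le_of_eq ?_)
      simp [norm_smul]
    have hw := wt_nonneg γ
    calc ‖x‖ ^ (k + 1) * |h γ x| = ‖x‖ ^ k * (‖x‖ * |h γ x|) := by ring
      _ ≤ ‖x‖ ^ k * ((∑ i, |x i|) * |h γ x|) := by gcongr
      _ = ∑ i, ‖x‖ ^ k * |x i * h γ x| := by
          rw [Finset.sum_mul, Finset.mul_sum]; simp [abs_mul]
      _ ≤ ∑ i : Fin d, (C + 3 ^ m * C) * wt d γ ^ (m + 1) := by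
          apply Finset.sum_le_sum
          intro i _
          have e : |x i * h γ x| ≤ wt d γ * |h (dn γ i) x| + wt d γ * |h (up γ i) x| := by
            rw [hh, multi_mul, ← hh, ← hh]
            refine (abs_add_le _ _).trans ?_
            rw [abs_mul, abs_mul, abs_of_nonneg (Real.sqrt_nonneg _),
              abs_of_nonneg (Real.sqrt_nonneg _)]
            gcongr
            · exact sqrt_le_wt' γ i
            · exact sqrt_le_wt γ i
          have h1 : ‖x‖ ^ k * |h (dn γ i) x| ≤ C * wt d γ ^ m := (H _ x).trans (by
            gcongr
            · exact wt_nonneg _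
            · exact wt_dn_le γ i)
          have h2 : ‖x‖ ^ k * |h (up γ i) x| ≤ C * (3 * wt d γ) ^ m := (H _ x).trans (by
            gcongr
            · exact wt_nonneg _
            · exact wt_up_le γ i)
          calc _ ≤ ‖x‖ ^ k * (wt d γ * |h (dn γ i) x| + wt d γ * |h (up γ i) x|) := by gcongr
            _ = wt d γ * (‖x‖ ^ k * |h (dn γ i) x|) + wt d γ * (‖x‖ ^ k * |h (up γ i) x|) := by
              ring
            _ ≤ wt d γ * (C * wt d γ ^ m) + wt d γ * (C * (3 * wt d γ) ^ m) := by gcongr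
            _ = _ := by rw [mul_pow]; ring
      _ = _ := by rw [Finset.sum_mul]

lemma sem_all {d : ℕ} (h : (Fin d → ℕ) → SchwartzMap (EuclideanSpace ℝ (Fin d)) ℝ)
    (hh : ∀ β x, h β x = hermiteFunMulti d β x)
    (k n : ℕ) : ∃ C : ℝ, ∃ m : ℕ, 0 ≤ C ∧
    ∀ γ, SchwartzMap.seminorm ℝ k n (h γ) ≤ C * wt d γ ^ m := by
  induction n with
  | zero =>
    obtain ⟨C, m, hC, H⟩ := sem_zero h hh k
    refine ⟨C, m, hC, fun γ => SchwartzMap.seminorm_le_bound ℝ k 0 _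
      (mul_nonneg hC (pow_nonneg (wt_nonneg γ) _)) fun x => ?_⟩
    simpa using H γ x
  | succ n ih =>
    obtain ⟨C, m, hC, H⟩ := ih
    obtain ⟨K, hK, HK⟩ := seminorm_succ (d := d) k n
    refine ⟨K * ∑ _i : Fin d, (C + 3 ^ m * C), m + 1, by positivity, fun γ => ?_⟩
    refine (HK _).trans ?_
    rw [mul_assoc, Finset.sum_mul]
    refine mul_le_mul_of_nonneg_left (Finset.sum_le_sum fun i _ => ?_) hK
    have hw := wt_nonneg γ
    rw [h_lineDeriv h hh]
    refine (map_sub_le_add _ _ _).trans ?_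
    rw [map_smul_eq_mul, map_smul_eq_mul, Real.norm_of_nonneg (by positivity),
      Real.norm_of_nonneg (by positivity)]
    have h1 : SchwartzMap.seminorm ℝ k n (h (dn γ i)) ≤ C * wt d γ ^ m := (H _).trans (by
      gcongr
      · exact wt_nonneg _
      · exact wt_dn_le γ i)
    have h2 : SchwartzMap.seminorm ℝ k n (h (up γ i)) ≤ C * (3 * wt d γ) ^ m := (H _).trans (by
      gcongr
      · exact wt_nonneg _
      · exact wt_up_le γ i)
    have s1 := sqrt_le_wt' γ i
    have s2 := sqrt_le_wt γ i
    calc _ ≤ wt d γ * (C * wt d γ ^ m) + wt d γ * (C * (3 * wt d γ) ^ m) := by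
          gcongr
          · linarith
          · linarith
      _ = _ := by rw [mul_pow]; ring

lemma T_bound {d : ℕ} (h : (Fin d → ℕ) → SchwartzMap (EuclideanSpace ℝ (Fin d)) ℝ)
    (hh : ∀ β x, h β x = hermiteFunMulti d β x)
    (T : SchwartzMap (EuclideanSpace ℝ (Fin d)) ℝ →L[ℝ] ℝ) (hd : 0 < d) :
    ∃ C : ℝ, ∃ m : ℕ, 0 ≤ C ∧ ∀ γ, |T (h γ)| ≤ C * wt d γ ^ m := by
  let q : Seminorm ℝ (SchwartzMap (EuclideanSpace ℝ (Fin d)) ℝ) :=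
    (normSeminorm ℝ ℝ).comp T.toLinearMap
  have hq : Continuous q := by
    change Continuous fun f => ‖T f‖
    fun_prop
  obtain ⟨s, C, -, hC⟩ := Seminorm.bound_of_continuous
    (schwartz_withSeminorms ℝ (EuclideanSpace ℝ (Fin d)) ℝ) q hq
  choose K m hK H using fun p : ℕ × ℕ => sem_all h hh p.1 p.2
  refine ⟨C * ∑ p ∈ s, K p, ∑ p ∈ s, m p,
    mul_nonneg C.2 (Finset.sum_nonneg fun p _ => hK p), fun γ => ?_⟩
  have h1 := hC (h γ)
  refine (show |T (h γ)| ≤ _ from h1).trans ?_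
  rw [smul_apply, NNReal.smul_def, smul_eq_mul, mul_assoc]
  refine mul_le_mul_of_nonneg_left ?_ C.2
  refine Seminorm.finset_sup_apply_le (by have := wt_nonneg γ; have := Finset.sum_nonneg (s := s) fun p _ => hK p; positivity) fun p hp => ?_
  refine (H p γ).trans ?_
  have := wt_nonneg γ
  apply mul_le_mul
  · exact Finset.single_le_sum (fun p _ => hK p) hp
  · exact pow_le_pow_right₀ (one_le_wt hd γ) (Finset.single_le_sum (fun p _ => Nat.zero_le _) hp)
  · positivity
  · exact Finset.sum_nonneg fun p _ => hK p

end

lemma summable_prod (d : ℕ) : Summable fun γ : Fin d → ℕ => ∏ i, (((γ i : ℝ) + 1) ^ 2)⁻¹ := by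
  have hs : Summable fun n : ℕ => (((n : ℝ) + 1) ^ 2)⁻¹ := by
    have := (summable_nat_add_iff 1).2 (Real.summable_nat_pow_inv.2 (one_lt_two : 1 < 2))
    simpa using this
  refine summable_of_sum_le (c := ∏ _i : Fin d, ∑' n : ℕ, (((n : ℝ) + 1) ^ 2)⁻¹)
    (fun γ => Finset.prod_nonneg fun i _ => by positivity) fun u => ?_
  calc _ ≤ ∑ γ ∈ Fintype.piFinset (fun i : Fin d => (u.image (fun γ : Fin d → ℕ => (γ i : ℕ)) : Finset ℕ)),
        ∏ i, (((γ i : ℝ) + 1) ^ 2)⁻¹ := by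
        apply Finset.sum_le_sum_of_subset_of_nonneg
        · intro γ hγ
          simp only [Fintype.mem_piFinset, Finset.mem_image]
          exact fun i => ⟨γ, hγ, rfl⟩
        · intros; exact Finset.prod_nonneg fun i _ => by positivity
    _ = ∏ i : Fin d, ∑ n ∈ (u.image (fun γ : Fin d → ℕ => (γ i : ℕ)) : Finset ℕ), (((n : ℝ) + 1) ^ 2)⁻¹ := by
        rw [Finset.prod_univ_sum]
    _ ≤ _ := by
        apply Finset.prod_le_prod
        · intros; exact Finset.sum_nonneg fun i _ => by positivity
        · intro i _
          exact hs.sum_le_tsum _ (fun _ _ => by positivity)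

lemma summable_wt (d : ℕ) : Summable fun γ : Fin d → ℕ => (wt d γ ^ (2 * d))⁻¹ := by
  refine Summable.of_nonneg_of_le (fun γ => inv_nonneg.2 (pow_nonneg (wt_nonneg γ) _))
    (fun γ => ?_) (summable_prod d)
  rw [Finset.prod_inv_distrib]
  apply inv_anti₀
  · exact Finset.prod_pos fun i _ => by positivity
  · calc _ ≤ ∏ i : Fin d, wt d γ ^ 2 := by
          apply Finset.prod_le_prod
          · intros; positivity
          · intro i _; have := idx_le_wt γ i; gcongr
      _ = _ := by simp [pow_mul]

end HB

namespace HB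

open LineDeriv SchwartzMap

/-- Euclidean space -/
abbrev Eu (d : ℕ) := EuclideanSpace ℝ (Fin d)

lemma coord_tg {d : ℕ} (i : Fin d) : Function.HasTemperateGrowth (fun x : Eu d => x i) :=
  (EuclideanSpace.proj i : Eu d →L[ℝ] ℝ).hasTemperateGrowth

/-- creation operator -/
noncomputable def cre {d : ℕ} (i : Fin d) (ψ : SchwartzMap (Eu d) ℝ) : SchwartzMap (Eu d) ℝ :=
  (1 / 2 : ℝ) • smulLeftCLM ℝ (fun x : Eu d => x i) ψ - ∂_{EuclideanSpace.single i (1 : ℝ)} ψ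

lemma cre_apply {d : ℕ} (i : Fin d) (ψ : SchwartzMap (Eu d) ℝ) (x : Eu d) :
    cre i ψ x = x i / 2 * ψ x - (∂_{EuclideanSpace.single i (1 : ℝ)} ψ) x := by
  simp [cre, smulLeftCLM_apply_apply (coord_tg i)]
  ring

lemma int_mul {d : ℕ} (f g : SchwartzMap (Eu d) ℝ) : Integrable (fun x => f x * g x) :=
  (bilinLeftCLM (ContinuousLinearMap.mul ℝ ℝ) g.hasTemperateGrowth f).integrable

lemma hermCoeff_eq {d : ℕ} (h : (Fin d → ℕ) → SchwartzMap (Eu d) ℝ)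
    (hh : ∀ β x, h β x = hermiteFunMulti d β x) (ψ : Eu d → ℝ) (γ : Fin d → ℕ) :
    hermCoeff d ψ γ = ∫ x, ψ x * h γ x := by
  simp [hermCoeff, hh]

lemma cre_coeff {d : ℕ} (h : (Fin d → ℕ) → SchwartzMap (Eu d) ℝ)
    (hh : ∀ β x, h β x = hermiteFunMulti d β x) (ψ : SchwartzMap (Eu d) ℝ) (γ : Fin d → ℕ)
    (i : Fin d) :
    hermCoeff d (cre i ψ) γ = Real.sqrt (γ i) * hermCoeff d ψ (dn γ i) := by
  rw [hermCoeff_eq h hh, hermCoeff_eq h hh]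
  have ibp := integral_mul_lineDerivOp_right_eq_neg_left (μ := volume) ψ (h γ)
    (EuclideanSpace.single i (1 : ℝ))
  have i1 := int_mul ((1 / 2 : ℝ) • smulLeftCLM ℝ (fun x : Eu d => x i) ψ) (h γ)
  have i2 := int_mul (∂_{EuclideanSpace.single i (1 : ℝ)} ψ) (h γ)
  have i3 := int_mul ψ (∂_{EuclideanSpace.single i (1 : ℝ)} (h γ))
  have e1 : ∫ x, cre i ψ x * h γ x =
      (∫ x, ((1 / 2 : ℝ) • smulLeftCLM ℝ (fun x : Eu d => x i) ψ) x * h γ x) -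
        ∫ x, (∂_{EuclideanSpace.single i (1 : ℝ)} ψ) x * h γ x := by
    rw [← integral_sub i1 i2]
    congr 1
    ext x
    simp [cre, sub_mul]
  rw [e1]
  have e2 : ∫ x, (∂_{EuclideanSpace.single i (1 : ℝ)} ψ) x * h γ x =
      -∫ x, ψ x * (∂_{EuclideanSpace.single i (1 : ℝ)} (h γ)) x := by
    rw [ibp]; simp
  rw [e2, sub_neg_eq_add, ← integral_add i1 i3, ← integral_const_mul]
  congr 1
  ext x
  have hm := multi_mul γ i x
  rw [← hh, ← hh, ← hh] at hm
  rw [h_lineDeriv h hh]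
  simp [smulLeftCLM_apply_apply (coord_tg i)]
  linear_combination (ψ x / 2) * hm

lemma cre_h {d : ℕ} (h : (Fin d → ℕ) → SchwartzMap (Eu d) ℝ)
    (hh : ∀ β x, h β x = hermiteFunMulti d β x) (γ : Fin d → ℕ) (i : Fin d) :
    cre i (h γ) = Real.sqrt (γ i + 1) • h (up γ i) := by
  ext x
  have hm := multi_mul γ i x
  rw [← hh, ← hh, ← hh] at hm
  rw [cre_apply, h_lineDeriv h hh]
  simp
  linear_combination (1 / 2 : ℝ) * hm

lemma h_zero_eq (d : ℕ) : ∃ K : ℝ, 0 < K ∧ K ^ 2 = ((2 * Real.pi) ^ (d / 2 : ℝ))⁻¹ ∧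
    ∀ x, hermiteFunMulti d 0 x = K * Real.exp (-(1 / 4) * ‖x‖ ^ 2) := by
  have hf : ∀ x, hermiteFun 0 x = (Real.sqrt (Real.sqrt (2 * Real.pi)))⁻¹ *
      Real.exp (-(x ^ 2 / 4)) := by
    intro x
    simp [hermiteFun, hermitePoly]
    rw [mul_assoc, mul_assoc, ← Real.exp_add]; simp
    ring
  have hp : (0 : ℝ) < 2 * Real.pi := by positivity
  refine ⟨(Real.sqrt (Real.sqrt (2 * Real.pi)))⁻¹ ^ d, by positivity, ?_, fun x => ?_⟩
  · rw [inv_pow, inv_pow, ← pow_mul, mul_comm d 2, pow_mul, Real.sq_sqrt (by positivity),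
      Real.sqrt_eq_rpow, ← Real.rpow_natCast, ← Real.rpow_mul hp.le]
    congr 2
    ring
  · simp only [hermiteFunMulti, Pi.zero_apply, hf]
    rw [Finset.prod_mul_distrib, ← Real.exp_sum, EuclideanSpace.norm_sq_eq]
    simp [Finset.mul_sum]
    left
    apply Finset.sum_congr rfl; intros; ring

lemma coeff_zero_zero (d : ℕ) : hermCoeff d (hermiteFunMulti d 0) 0 = 1 := by
  obtain ⟨K, hK, hK2, H⟩ := h_zero_eq d
  have e : ∀ x : Eu d, hermiteFunMulti d 0 x * hermiteFunMulti d 0 x =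
      K ^ 2 * Real.exp (-(1 / 2) * ‖x‖ ^ 2) := by
    intro x
    rw [H]
    have : Real.exp (-(1 / 2) * ‖x‖ ^ 2) =
        Real.exp (-(1 / 4) * ‖x‖ ^ 2) * Real.exp (-(1 / 4) * ‖x‖ ^ 2) := by
      rw [← Real.exp_add]; congr 1; ring
    rw [this]; ring
  simp only [hermCoeff, e]
  rw [integral_const_mul, GaussianFourier.integral_rexp_neg_mul_sq_norm (by norm_num), hK2]
  have hp : (0 : ℝ) < 2 * Real.pi := by positivity
  simp
  rw [mul_comm Real.pi 2]
  exact inv_mul_cancel₀ (by positivity)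

lemma coeff_up {d : ℕ} (h : (Fin d → ℕ) → SchwartzMap (Eu d) ℝ)
    (hh : ∀ β x, h β x = hermiteFunMulti d β x) (γ β : Fin d → ℕ) (i : Fin d) :
    Real.sqrt (γ i + 1) * hermCoeff d (h (up γ i)) β =
      Real.sqrt (β i) * hermCoeff d (h γ) (dn β i) := by
  rw [← cre_coeff h hh, cre_h h hh]
  simp only [hermCoeff]
  rw [← integral_const_mul]
  simp [mul_assoc]

lemma coeff_orth {d : ℕ} (h : (Fin d → ℕ) → SchwartzMap (Eu d) ℝ)
    (hh : ∀ β x, h β x = hermiteFunMulti d β x) (n : ℕ) : ∀ γ β : Fin d → ℕ, ∑ i, γ i = n →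
    hermCoeff d (h γ) β = if γ = β then 1 else 0 := by
  have symm : ∀ γ β, hermCoeff d (h γ) β = hermCoeff d (h β) γ := by
    intro γ β
    rw [hermCoeff_eq h hh, hermCoeff_eq h hh]
    simp only [mul_comm]
  induction n with
  | zero =>
    intro γ β hγ
    have h0 : γ = 0 := by
      ext i
      exact (Finset.sum_eq_zero_iff.1 hγ) i (Finset.mem_univ i)
    subst h0
    by_cases hβ : 0 = β
    · subst hβ
      have : (h 0 : Eu d → ℝ) = hermiteFunMulti d 0 := by ext x; exact hh 0 x
      rw [this, coeff_zero_zero]; simp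
    · rw [if_neg hβ]
      obtain ⟨i, hi⟩ : ∃ i, β i ≠ 0 := by
        by_contra hcon
        push Not at hcon
        exact hβ (by ext i; simp [hcon])
      have := coeff_up h hh (dn β i) 0 i
      rw [up_dn β i hi] at this
      simp at this
      rw [symm]
      rcases this with h1 | h1
      · have : (0 : ℝ) < Real.sqrt (dn β i i + 1) := by positivity
        exact absurd h1 this.ne'
      · exact h1
  | succ n ih =>
    intro γ β hγ
    obtain ⟨i, hi⟩ : ∃ i, γ i ≠ 0 := by
      by_contra hcon
      push Not at hcon
      simp [hcon] at hγ
    obtain ⟨γ', rfl⟩ : ∃ γ', γ = up γ' i := ⟨dn γ i, (up_dn γ i hi).symm⟩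
    have hs : ∑ j, γ' j = n := by
      have := sum_update γ' i (γ' i + 1)
      unfold up at hγ
      omega
    have key := coeff_up h hh γ' β i
    have hpos : (0 : ℝ) < Real.sqrt (γ' i + 1) := by positivity
    by_cases hb : β i = 0
    · rw [if_neg]
      · rw [hb] at key
        simp at key
        rcases key with h1 | h1
        · exact absurd h1 hpos.ne'
        · exact h1
      · rintro rfl
        exact hi hb
    · obtain ⟨β', rfl⟩ : ∃ β', β = up β' i := ⟨dn β i, (up_dn β i hb).symm⟩
      rw [dn_up, ih γ' β' hs] at key
      by_cases he : γ' = β'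
      · subst he
        simp
        have hu : ((up γ' i i : ℕ) : ℝ) = γ' i + 1 := by simp [up]
        rw [if_pos rfl, hu] at key
        exact mul_left_cancel₀ hpos.ne' key
      · rw [if_neg he] at key
        rw [if_neg (fun hc => he (up_inj i hc))]
        simp at key
        rcases key with h1 | h1
        · exact absurd h1 hpos.ne'
        · exact h1


lemma poly_orth {d : ℕ} (h : (Fin d → ℕ) → SchwartzMap (Eu d) ℝ)
    (hh : ∀ β x, h β x = hermiteFunMulti d β x) (f : Eu d → ℝ) (hf : MemLp f 2)
    (H : ∀ γ, ∫ x, f x * h γ x = 0) (t : Eu d) (n : ℕ) :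
    ∫ x, f x * (inner ℝ x t ^ n * h 0 x) = 0 := by
  let V : Submodule ℝ (Eu d → ℝ) := Submodule.span ℝ (Set.range fun γ => (h γ : Eu d → ℝ))
  have hmul : ∀ i : Fin d, ∀ u ∈ V, (fun x => x i * u x) ∈ V := by
    intro i u hu
    induction hu using Submodule.span_induction with
    | mem u hu =>
      obtain ⟨γ, rfl⟩ := hu
      have e : (fun x : Eu d => x i * h γ x) = Real.sqrt (γ i) • (h (dn γ i) : Eu d → ℝ) +
          Real.sqrt (γ i + 1) • (h (up γ i) : Eu d → ℝ) := by
        ext x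
        simp only [Pi.add_apply, Pi.smul_apply, hh, smul_eq_mul]
        exact multi_mul γ i x
      simp only [e]
      exact V.add_mem (V.smul_mem _ (Submodule.subset_span ⟨_, rfl⟩))
        (V.smul_mem _ (Submodule.subset_span ⟨_, rfl⟩))
    | zero =>
      have e : (fun x : Eu d => x i * (0 : Eu d → ℝ) x) = 0 := by funext x; simp
      rw [e]; exact V.zero_mem
    | add u v _ _ hu hv =>
      have := V.add_mem hu hv
      convert this using 1
      ext x; simp [mul_add]
    | smul a u _ hu =>
      have := V.smul_mem a hu
      convert this using 1
      ext x; simp; ring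
  have hin : ∀ u ∈ V, (fun x => inner ℝ x t * u x) ∈ V := by
    intro u hu
    have e : (fun x : Eu d => inner ℝ x t * u x) = ∑ i, t i • (fun x : Eu d => x i * u x) := by
      ext x
      simp [PiLp.inner_apply, Finset.sum_mul, mul_assoc]
    rw [e]
    exact V.sum_mem fun i _ => V.smul_mem _ (hmul i u hu)
  have hpow : (fun x : Eu d => inner ℝ x t ^ n * h 0 x) ∈ V := by
    induction n with
    | zero =>
      have : (h 0 : Eu d → ℝ) ∈ V := Submodule.subset_span ⟨0, rfl⟩
      simpa using this
    | succ n ih =>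
      have := hin _ ih
      convert this using 1
      ext x; ring
  have hIntg : ∀ u ∈ V, Integrable (fun x => f x * u x) ∧ ∫ x, f x * u x = 0 := by
    intro u hu
    induction hu using Submodule.span_induction with
    | mem u hu =>
      obtain ⟨γ, rfl⟩ := hu
      exact ⟨hf.integrable_mul ((h γ).memLp 2), H γ⟩
    | zero => simp
    | add u v _ _ hu hv =>
      have e : (fun x => f x * (u + v) x) = fun x => f x * u x + f x * v x := by
        ext x; simp [mul_add]
      rw [e]
      exact ⟨hu.1.add hv.1, by rw [integral_add hu.1 hv.1, hu.2, hv.2, add_zero]⟩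
    | smul a u _ hu =>
      have e : (fun x => f x * (a • u) x) = fun x => a * (f x * u x) := by
        ext x; simp; ring
      rw [e]
      exact ⟨hu.1.const_mul a, by rw [integral_const_mul, hu.2, mul_zero]⟩
  exact (hIntg _ hpow).2

lemma gauss_integrable (d : ℕ) (b : ℝ) (hb : 0 < b) :
    Integrable (fun x : Eu d => Real.exp (-b * ‖x‖ ^ 2)) := by
  by_contra hcon
  have := integral_undef hcon
  rw [GaussianFourier.integral_rexp_neg_mul_sq_norm hb] at this
  have h2 : (0 : ℝ) < (Real.pi / b) ^ (Module.finrank ℝ (Eu d) / 2 : ℝ) := by positivity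
  exact h2.ne' this

lemma fourier_zero {d : ℕ} (h : (Fin d → ℕ) → SchwartzMap (Eu d) ℝ)
    (hh : ∀ β x, h β x = hermiteFunMulti d β x) (f : Eu d → ℝ) (hf : MemLp f 2)
    (H : ∀ γ, ∫ x, f x * h γ x = 0) (t : Eu d) :
    ∫ x, ((f x * h 0 x : ℝ) : ℂ) * Complex.exp ((inner ℝ x t : ℝ) * Complex.I) = 0 := by
  obtain ⟨K, hK, -, hK0⟩ := h_zero_eq d
  have h0 : ∀ x, h 0 x = K * Real.exp (-(1 / 4) * ‖x‖ ^ 2) := fun x => by rw [hh, hK0]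
  have h0pos : ∀ x, 0 < h 0 x := fun x => by rw [h0]; positivity
  have hg : Integrable (fun x => f x * h 0 x) := hf.integrable_mul ((h 0).memLp 2)
  let F : ℕ → Eu d → ℂ := fun n x =>
    ((f x * (inner ℝ x t ^ n * h 0 x) : ℝ) : ℂ) * (Complex.I ^ n / n.factorial)
  let bd : ℕ → Eu d → ℝ := fun n x => |f x| * h 0 x * ((‖t‖ * ‖x‖) ^ n / n.factorial)
  have hbd : ∀ x, HasSum (fun n => bd n x) (|f x| * h 0 x * Real.exp (‖t‖ * ‖x‖)) := by
    intro x
    have := NormedSpace.expSeries_div_hasSum_exp (𝔸 := ℝ) (‖t‖ * ‖x‖)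
    rw [← Real.exp_eq_exp_ℝ] at this
    exact this.mul_left _
  have key : HasSum (fun n => ∫ x, F n x)
      (∫ x, ((f x * h 0 x : ℝ) : ℂ) * Complex.exp ((inner ℝ x t : ℝ) * Complex.I)) := by
    refine hasSum_integral_of_dominated_convergence bd ?_ ?_ ?_ ?_ ?_
    · intro n
      have : AEStronglyMeasurable (fun x => f x * (inner ℝ x t ^ n * h 0 x)) volume := by
        refine hf.1.mul (Continuous.aestronglyMeasurable ?_)
        have := (h 0).continuous
        fun_prop
      exact (Complex.continuous_ofReal.comp_aestronglyMeasurable this).mul_const _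
    · intro n
      refine Filter.Eventually.of_forall fun x => ?_
      have hi : |inner ℝ x t| ≤ ‖t‖ * ‖x‖ := by
        rw [mul_comm]; exact abs_real_inner_le_norm x t
      simp only [F, bd, norm_mul, Complex.norm_real, norm_div, norm_pow, Complex.norm_I, one_pow,
        Complex.norm_natCast, Real.norm_eq_abs, abs_of_pos (h0pos x)]
      calc _ = |f x| * h 0 x * (|inner ℝ x t| ^ n / n.factorial) := by ring
        _ ≤ _ := by have := (h0pos x).le; gcongr
    · exact Filter.Eventually.of_forall fun x => (hbd x).summable
    · have e : (fun x => ∑' n, bd n x) = fun x => |f x| * h 0 x * Real.exp (‖t‖ * ‖x‖) := by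
        ext x; exact (hbd x).tsum_eq
      rw [e]
      have hG : MemLp (fun x : Eu d => Real.exp (-(1 / 8) * ‖x‖ ^ 2)) 2 := by
        rw [memLp_two_iff_integrable_sq (by fun_prop)]
        convert gauss_integrable d (1 / 4) (by norm_num) using 2 with x
        rw [← Real.exp_nat_mul]; congr 1; push_cast; ring
      have hI : Integrable (fun x => |f x| * Real.exp (-(1 / 8) * ‖x‖ ^ 2)) :=
        hf.abs.integrable_mul hG
      refine Integrable.mono' (hI.const_mul (K * Real.exp (2 * ‖t‖ ^ 2))) ?_
        (Filter.Eventually.of_forall fun x => ?_)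
      · have := (h 0).continuous
        have h2 : Continuous fun x : Eu d => h 0 x * Real.exp (‖t‖ * ‖x‖) := by fun_prop
        simp only [mul_assoc]
        exact hf.abs.1.mul h2.aestronglyMeasurable
      · rw [Real.norm_of_nonneg (by have := (h0pos x).le; positivity), h0]
        have : Real.exp (-(1 / 4) * ‖x‖ ^ 2) * Real.exp (‖t‖ * ‖x‖) ≤
            Real.exp (2 * ‖t‖ ^ 2) * Real.exp (-(1 / 8) * ‖x‖ ^ 2) := by
          rw [← Real.exp_add, ← Real.exp_add]
          apply Real.exp_le_exp.2
          nlinarith [sq_nonneg (‖x‖ - 4 * ‖t‖)]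
        calc _ = |f x| * K * (Real.exp (-(1 / 4) * ‖x‖ ^ 2) * Real.exp (‖t‖ * ‖x‖)) := by ring
          _ ≤ |f x| * K * (Real.exp (2 * ‖t‖ ^ 2) * Real.exp (-(1 / 8) * ‖x‖ ^ 2)) := by gcongr
          _ = _ := by ring
    · refine Filter.Eventually.of_forall fun x => ?_
      have := (NormedSpace.expSeries_div_hasSum_exp (𝔸 := ℂ)
        ((inner ℝ x t : ℝ) * Complex.I)).mul_left ((f x * h 0 x : ℝ) : ℂ)
      rw [← Complex.exp_eq_exp_ℂ] at this
      have e : (fun n => F n x) = fun n : ℕ => ((f x * h 0 x : ℝ) : ℂ) *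
          (((inner ℝ x t : ℝ) * Complex.I) ^ n / n.factorial) := by
        funext n
        simp only [F]
        push_cast
        rw [mul_pow]
        ring
      rw [e]; exact this
  have hz : ∀ n, ∫ x, F n x = 0 := by
    intro n
    simp only [F]
    rw [integral_mul_const, integral_complex_ofReal, poly_orth h hh f hf H t n]
    simp
  simp only [hz] at key
  exact key.unique hasSum_zero

lemma ae_zero_of_fourier {d : ℕ} (g : Eu d → ℝ) (hg : Integrable g)
    (H : ∀ t : Eu d, ∫ x, ((g x : ℝ) : ℂ) * Complex.exp ((inner ℝ x t : ℝ) * Complex.I) = 0) :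
    g =ᵐ[volume] 0 := by
  have m1 : AEMeasurable (fun x => ENNReal.ofReal (g x)) volume :=
    hg.aemeasurable.ennreal_ofReal
  have m2 : AEMeasurable (fun x => ENNReal.ofReal (-g x)) volume :=
    hg.neg.aemeasurable.ennreal_ofReal
  have f1 : IsFiniteMeasure (volume.withDensity fun x => ENNReal.ofReal (g x)) :=
    isFiniteMeasure_withDensity_ofReal hg.2
  have f2 : IsFiniteMeasure (volume.withDensity fun x => ENNReal.ofReal (-g x)) :=
    isFiniteMeasure_withDensity_ofReal hg.neg.2
  have hIntg : ∀ (t : Eu d) (u : Eu d → ℝ), Integrable u → Integrable fun x =>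
      u x • Complex.exp ((inner ℝ x t : ℝ) * Complex.I) := by
    intro t u hu
    refine Integrable.mono' hu.norm ?_ (Filter.Eventually.of_forall fun x => ?_)
    · exact hu.1.smul (Continuous.aestronglyMeasurable (by fun_prop))
    · rw [norm_smul, Complex.norm_exp_ofReal_mul_I, mul_one]
  have hE : volume.withDensity (fun x => ENNReal.ofReal (g x)) =
      volume.withDensity (fun x => ENNReal.ofReal (-g x)) := by
    apply Measure.ext_of_charFun
    ext t
    rw [charFun_apply, charFun_apply,
      integral_withDensity_eq_integral_toReal_smul₀ m1 (by simp),
      integral_withDensity_eq_integral_toReal_smul₀ m2 (by simp), ← sub_eq_zero]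
    simp only [ENNReal.toReal_ofReal']
    rw [← integral_sub (hIntg t _ hg.pos_part) (hIntg t _ hg.neg_part)]
    rw [← H t]
    congr 1
    ext x
    rw [← sub_smul, Complex.real_smul]
    congr 2
    rcases le_total (g x) 0 with h1 | h1
    · rw [max_eq_right h1, max_eq_left (by linarith)]; ring
    · rw [max_eq_left h1, max_eq_right (by linarith)]; ring
  rw [withDensity_eq_iff_of_sigmaFinite m1 m2] at hE
  filter_upwards [hE] with x hx
  have := congrArg ENNReal.toReal hx
  rw [ENNReal.toReal_ofReal', ENNReal.toReal_ofReal'] at this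
  simp only [Pi.zero_apply]
  rcases le_total (g x) 0 with h1 | h1
  · rw [max_eq_right h1, max_eq_left (by linarith)] at this; linarith
  · rw [max_eq_left h1, max_eq_right (by linarith)] at this; linarith

lemma complete {d : ℕ} (h : (Fin d → ℕ) → SchwartzMap (Eu d) ℝ)
    (hh : ∀ β x, h β x = hermiteFunMulti d β x) (f : Eu d → ℝ) (hf : MemLp f 2)
    (H : ∀ γ, ∫ x, f x * h γ x = 0) : f =ᵐ[volume] 0 := by
  obtain ⟨K, hK, -, hK0⟩ := h_zero_eq d
  have hg : Integrable (fun x => f x * h 0 x) := hf.integrable_mul ((h 0).memLp 2)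
  filter_upwards [ae_zero_of_fourier _ hg (fourier_zero h hh f hf H)] with x hx
  have : h 0 x ≠ 0 := by rw [hh, hK0]; positivity
  simpa [this] using hx

lemma inner_toLp {d : ℕ} (f g : SchwartzMap (Eu d) ℝ) :
    inner ℝ (f.toLp 2 volume) (g.toLp 2 volume) = ∫ x, f x * g x := by
  rw [L2.inner_def]
  apply integral_congr_ae
  filter_upwards [f.coeFn_toLp 2 volume, g.coeFn_toLp 2 volume] with x h1 h2
  rw [h1, h2]
  simp [mul_comm]

lemma parseval {d : ℕ} (h : (Fin d → ℕ) → SchwartzMap (Eu d) ℝ)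
    (hh : ∀ β x, h β x = hermiteFunMulti d β x) (ψ : SchwartzMap (Eu d) ℝ) :
    HasSum (fun γ => hermCoeff d ψ γ ^ 2) (∫ x, ψ x * ψ x) := by
  let v : (Fin d → ℕ) → Lp ℝ 2 (volume : Measure (Eu d)) := fun γ => (h γ).toLp 2 volume
  have hv : Orthonormal ℝ v := by
    rw [orthonormal_iff_ite]
    intro γ β
    rw [inner_toLp, ← hermCoeff_eq h hh, coeff_orth h hh _ γ β rfl]
  have hsp : (Submodule.span ℝ (Set.range v))ᗮ = ⊥ := by
    rw [Submodule.eq_bot_iff]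
    intro f hf
    rw [Submodule.mem_orthogonal] at hf
    rw [Lp.eq_zero_iff_ae_eq_zero]
    apply complete h hh f (Lp.memLp f)
    intro γ
    have := hf (v γ) (Submodule.subset_span ⟨γ, rfl⟩)
    rw [L2.inner_def] at this
    rw [← this]
    apply integral_congr_ae
    filter_upwards [(h γ).coeFn_toLp 2 volume] with x h1
    simp only [v]
    rw [h1]
    simp
  let b := HilbertBasis.mkOfOrthogonalEqBot hv hsp
  have hb := b.hasSum_inner_mul_inner (ψ.toLp 2 volume) (ψ.toLp 2 volume)
  rw [inner_toLp] at hb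
  have e2 : (fun γ => hermCoeff d ψ γ ^ 2) =
      fun γ => inner ℝ (ψ.toLp 2 volume) (b γ) * inner ℝ (b γ) (ψ.toLp 2 volume) := by
    funext γ
    have e : b γ = (h γ).toLp 2 volume := by
      simp only [b, HilbertBasis.coe_mkOfOrthogonalEqBot]; rfl
    rw [e, inner_toLp, inner_toLp, hermCoeff_eq h hh, pow_two]
    congr 1
    simp only [mul_comm]
  rw [e2]; exact hb

end HB

namespace HB

open LineDeriv SchwartzMap

/-- weighted square sum of coefficients -/
noncomputable def W {d : ℕ} (s : ℕ) (ψ : SchwartzMap (Eu d) ℝ) : ENNReal :=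
  ∑' β : Fin d → ℕ, ENNReal.ofReal (wt d β ^ s * hermCoeff d ψ β ^ 2)

lemma coeff_sq_up {d : ℕ} (h : (Fin d → ℕ) → SchwartzMap (Eu d) ℝ)
    (hh : ∀ β x, h β x = hermiteFunMulti d β x) (ψ : SchwartzMap (Eu d) ℝ) (β : Fin d → ℕ)
    (i : Fin d) : hermCoeff d (cre i ψ) (up β i) ^ 2 = (β i + 1) * hermCoeff d ψ β ^ 2 := by
  have hu : ((up β i i : ℕ) : ℝ) = β i + 1 := by simp [up]
  rw [cre_coeff h hh, dn_up, mul_pow, Real.sq_sqrt (by positivity), hu]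

lemma wt_le_sum {d : ℕ} (β : Fin d → ℕ) : wt d β ≤ 2 * ∑ i, ((β i : ℝ) + 1) := by
  unfold wt
  push_cast
  rw [Finset.sum_add_distrib]
  simp
  have : (0 : ℝ) ≤ d := by positivity
  linarith

lemma W_succ_le {d : ℕ} (h : (Fin d → ℕ) → SchwartzMap (Eu d) ℝ)
    (hh : ∀ β x, h β x = hermiteFunMulti d β x) (s : ℕ) (ψ : SchwartzMap (Eu d) ℝ) :
    W (s + 1) ψ ≤ ENNReal.ofReal 2 * ∑ i, W s (cre i ψ) := by
  have h1 : ∀ i, ∑' β : Fin d → ℕ, ENNReal.ofReal (wt d β ^ s * ((β i + 1) * hermCoeff d ψ β ^ 2))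
      ≤ W s (cre i ψ) := by
    intro i
    have := ENNReal.tsum_comp_le_tsum_of_injective (fun a b hab => up_inj i hab :
      Function.Injective fun β : Fin d → ℕ => up β i)
      (fun γ => ENNReal.ofReal (wt d γ ^ s * hermCoeff d (cre i ψ) γ ^ 2))
    refine le_trans (ENNReal.tsum_le_tsum fun β => ?_) this
    apply ENNReal.ofReal_le_ofReal
    rw [coeff_sq_up h hh]
    have := wt_nonneg β
    have h3 : wt d β ≤ wt d (up β i) := by rw [wt_up]; linarith
    gcongr
  calc W (s + 1) ψ ≤ ∑' β : Fin d → ℕ, ENNReal.ofReal 2 * ∑ i,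
        ENNReal.ofReal (wt d β ^ s * ((β i + 1) * hermCoeff d ψ β ^ 2)) := by
        refine ENNReal.tsum_le_tsum fun β => ?_
        have hw := wt_nonneg β
        rw [← ENNReal.ofReal_sum_of_nonneg (fun i _ => by positivity),
          ← ENNReal.ofReal_mul (by norm_num)]
        apply ENNReal.ofReal_le_ofReal
        rw [← Finset.mul_sum, ← Finset.sum_mul, pow_succ]
        have h4 := mul_le_mul_of_nonneg_left (wt_le_sum β)
          (by positivity : 0 ≤ wt d β ^ s * hermCoeff d ψ β ^ 2)
        linarith
    _ = ENNReal.ofReal 2 * ∑ i, ∑' β : Fin d → ℕ,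
        ENNReal.ofReal (wt d β ^ s * ((β i + 1) * hermCoeff d ψ β ^ 2)) := by
        rw [ENNReal.tsum_mul_left, Summable.tsum_finsetSum fun i _ => ENNReal.summable]
    _ ≤ _ := by
        gcongr with i _
        exact h1 i

lemma W_cre_le {d : ℕ} (h : (Fin d → ℕ) → SchwartzMap (Eu d) ℝ)
    (hh : ∀ β x, h β x = hermiteFunMulti d β x) (s : ℕ) (ψ : SchwartzMap (Eu d) ℝ) (i : Fin d) :
    W s (cre i ψ) ≤ ENNReal.ofReal (3 ^ s) * W (s + 1) ψ := by
  have hd : 0 < d := i.pos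
  have inj : Function.Injective fun β : Fin d → ℕ => up β i := fun a b hab => up_inj i hab
  unfold W
  rw [← inj.tsum_eq (f := fun γ => ENNReal.ofReal (wt d γ ^ s * hermCoeff d (cre i ψ) γ ^ 2)),
    ← ENNReal.tsum_mul_left]
  · refine ENNReal.tsum_le_tsum fun β => ?_
    rw [← ENNReal.ofReal_mul (by positivity)]
    apply ENNReal.ofReal_le_ofReal
    rw [coeff_sq_up h hh]
    have hw := wt_nonneg β
    have hw2 := wt_nonneg (up β i)
    calc wt d (up β i) ^ s * ((β i + 1) * hermCoeff d ψ β ^ 2)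
        ≤ (3 * wt d β) ^ s * (wt d β * hermCoeff d ψ β ^ 2) := by
          have a1 := wt_up_le β i
          have a2 := idx_le_wt β i
          gcongr
      _ = _ := by rw [mul_pow]; ring
  · intro γ hγ
    by_cases h0 : γ i = 0
    · exfalso
      apply hγ
      simp [cre_coeff h hh, h0]
    · exact ⟨dn γ i, up_dn γ i h0⟩

lemma W_zero {d : ℕ} (h : (Fin d → ℕ) → SchwartzMap (Eu d) ℝ)
    (hh : ∀ β x, h β x = hermiteFunMulti d β x) (ψ : SchwartzMap (Eu d) ℝ) :
    W 0 ψ = ENNReal.ofReal (∫ x, ψ x * ψ x) := by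
  have p := parseval h hh ψ
  rw [← p.tsum_eq, ENNReal.ofReal_tsum_of_nonneg (fun _ => by positivity) p.summable]
  simp [W]

lemma W_ne_top {d : ℕ} (h : (Fin d → ℕ) → SchwartzMap (Eu d) ℝ)
    (hh : ∀ β x, h β x = hermiteFunMulti d β x) (s : ℕ) :
    ∀ ψ : SchwartzMap (Eu d) ℝ, W s ψ ≠ ⊤ := by
  induction s with
  | zero => intro ψ; rw [W_zero h hh]; exact ENNReal.ofReal_ne_top
  | succ s ih =>
    intro ψ
    refine ne_top_of_le_ne_top ?_ (W_succ_le h hh s ψ)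
    exact ENNReal.mul_ne_top (by simp) (ENNReal.sum_ne_top.2 fun i _ => ih _)

lemma W_mono {d : ℕ} (hd : 0 < d) (s : ℕ) (ψ : SchwartzMap (Eu d) ℝ) : W s ψ ≤ W (s + 1) ψ := by
  refine ENNReal.tsum_le_tsum fun β => ENNReal.ofReal_le_ofReal ?_
  have := one_le_wt hd β
  gcongr
  omega

lemma W_sub {d : ℕ} (h : (Fin d → ℕ) → SchwartzMap (Eu d) ℝ)
    (hh : ∀ β x, h β x = hermiteFunMulti d β x) (s : ℕ) (ψ φ : SchwartzMap (Eu d) ℝ) (a : ℝ) :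
    W s (ψ - a • φ) ≤ ENNReal.ofReal 2 * W s ψ + ENNReal.ofReal (2 * a ^ 2) * W s φ := by
  unfold W
  rw [← ENNReal.tsum_mul_left, ← ENNReal.tsum_mul_left, ← ENNReal.tsum_add]
  refine ENNReal.tsum_le_tsum fun β => ?_
  have hw := wt_nonneg β
  rw [← ENNReal.ofReal_mul (by norm_num),
    ← ENNReal.ofReal_mul (by positivity), ← ENNReal.ofReal_add (by positivity) (by positivity)]
  apply ENNReal.ofReal_le_ofReal
  have e : hermCoeff d (ψ - a • φ : SchwartzMap (Eu d) ℝ) β =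
      hermCoeff d ψ β - a * hermCoeff d φ β := by
    rw [hermCoeff_eq h hh, hermCoeff_eq h hh, hermCoeff_eq h hh, ← integral_const_mul,
      ← integral_sub (int_mul _ _) ((int_mul _ _).const_mul _)]
    congr 1
    ext x
    simp
    ring
  rw [e]
  have : (hermCoeff d ψ β - a * hermCoeff d φ β) ^ 2 ≤
      2 * hermCoeff d ψ β ^ 2 + 2 * a ^ 2 * hermCoeff d φ β ^ 2 := by
    nlinarith [sq_nonneg (hermCoeff d ψ β + a * hermCoeff d φ β)]
  calc _ ≤ wt d β ^ s * (2 * hermCoeff d ψ β ^ 2 + 2 * a ^ 2 * hermCoeff d φ β ^ 2) := by gcongr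
    _ = _ := by ring

/-- translation -/
noncomputable def tr {d : ℕ} (x : Eu d) (ψ : SchwartzMap (Eu d) ℝ) : SchwartzMap (Eu d) ℝ :=
  compSubConstCLM ℝ (-x) ψ

lemma tr_apply {d : ℕ} (x : Eu d) (ψ : SchwartzMap (Eu d) ℝ) (y : Eu d) :
    tr x ψ y = ψ (y + x) := by
  simp [tr, compSubConstCLM_apply]

lemma cre_tr {d : ℕ} (x : Eu d) (ψ : SchwartzMap (Eu d) ℝ) (i : Fin d) :
    cre i (tr x ψ) = tr x (cre i ψ - (x i / 2) • ψ) := by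
  ext y
  rw [cre_apply, tr_apply, tr_apply]
  have e : (∂_{EuclideanSpace.single i (1 : ℝ)} (tr x ψ)) y =
      (∂_{EuclideanSpace.single i (1 : ℝ)} ψ) (y + x) := by
    rw [lineDerivOp_apply, lineDerivOp_apply]
    have : (tr x ψ : Eu d → ℝ) = fun y => ψ (y + x) := by ext y; exact tr_apply x ψ y
    simp only [lineDeriv, this]
    congr 1
    ext t
    congr 1
    abel
  rw [e]
  simp [cre_apply]
  ring

/-- translation polynomial -/
noncomputable def TP (d : ℕ) : ℕ → Polynomial ℝ
  | 0 => 1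
  | s + 1 => TP d s * (Polynomial.C (4 * d * 3 ^ s : ℝ) + Polynomial.C (d : ℝ) * Polynomial.X ^ 2)

lemma mul_coeff_nonneg (p q : Polynomial ℝ) (hp : ∀ k, 0 ≤ p.coeff k) (hq : ∀ k, 0 ≤ q.coeff k)
    (k : ℕ) : 0 ≤ (p * q).coeff k := by
  rw [Polynomial.coeff_mul]
  exact Finset.sum_nonneg fun x _ => mul_nonneg (hp _) (hq _)

lemma TP_coeff (d s : ℕ) : ∀ k, 0 ≤ (TP d s).coeff k := by
  induction s with
  | zero => intro k; simp only [TP, Polynomial.coeff_one]; split_ifs <;> norm_num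
  | succ s ih =>
    refine mul_coeff_nonneg _ _ ih fun k => ?_
    rw [Polynomial.coeff_add, Polynomial.coeff_C, Polynomial.coeff_C_mul, Polynomial.coeff_X_pow]
    split_ifs <;> positivity

lemma TP_eval_nonneg (d s : ℕ) (r : ℝ) : 0 ≤ (TP d s).eval r := by
  induction s with
  | zero => simp [TP]
  | succ s ih =>
    simp only [TP, Polynomial.eval_mul]
    refine mul_nonneg ih ?_
    simp
    positivity

lemma W_tr {d : ℕ} (hd : 0 < d) (h : (Fin d → ℕ) → SchwartzMap (Eu d) ℝ)
    (hh : ∀ β x, h β x = hermiteFunMulti d β x) (x : Eu d) (s : ℕ) :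
    ∀ ψ : SchwartzMap (Eu d) ℝ, W s (tr x ψ) ≤ ENNReal.ofReal ((TP d s).eval ‖x‖) * W s ψ := by
  induction s with
  | zero =>
    intro ψ
    rw [W_zero h hh, W_zero h hh]
    simp only [tr_apply, TP]
    rw [integral_add_right_eq_self (fun y => ψ y * ψ y) x]
    simp
  | succ s ih =>
    intro ψ
    have hx : ∀ i, x i ^ 2 ≤ ‖x‖ ^ 2 := by
      intro i
      have := PiLp.norm_apply_le x i
      rw [Real.norm_eq_abs] at this
      rw [← sq_abs]
      gcongr
    have key : ∀ i, W s (cre i (tr x ψ)) ≤ ENNReal.ofReal ((TP d s).eval ‖x‖ *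
        (2 * 3 ^ s + ‖x‖ ^ 2 / 2)) * W (s + 1) ψ := by
      intro i
      rw [cre_tr, ENNReal.ofReal_mul (TP_eval_nonneg d s _), mul_assoc]
      refine (ih _).trans (mul_le_mul_right ?_ _)
      refine (W_sub h hh s _ _ _).trans ?_
      rw [ENNReal.ofReal_add (by positivity) (by positivity), add_mul,
        ENNReal.ofReal_mul (p := 2) (q := 3 ^ s) (by norm_num), mul_assoc]
      refine add_le_add (mul_le_mul_right (W_cre_le h hh s ψ i) _) ?_
      refine mul_le_mul' (ENNReal.ofReal_le_ofReal ?_) (W_mono hd s ψ)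
      have := hx i
      nlinarith
    calc W (s + 1) (tr x ψ) ≤ ENNReal.ofReal 2 * ∑ i, W s (cre i (tr x ψ)) := W_succ_le h hh s _
      _ ≤ ENNReal.ofReal 2 * ∑ i : Fin d, ENNReal.ofReal ((TP d s).eval ‖x‖ *
        (2 * 3 ^ s + ‖x‖ ^ 2 / 2)) * W (s + 1) ψ := by
          gcongr with i _
          exact key i
      _ = _ := by
          rw [Finset.sum_const, Finset.card_univ, Fintype.card_fin, nsmul_eq_mul,
            ← ENNReal.ofReal_natCast, ← mul_assoc, ← mul_assoc,
            ← ENNReal.ofReal_mul (by norm_num), ← ENNReal.ofReal_mul (by positivity)]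
          congr 2
          simp [TP]
          ring

lemma W_toReal {d : ℕ} (q : ℕ) (ψ : SchwartzMap (Eu d) ℝ) :
    hermNorm d q (fun z => ψ z) = Real.sqrt (W (2 * q) ψ).toReal := by
  unfold hermNorm W
  congr 1
  rw [ENNReal.tsum_toReal_eq (fun _ => ENNReal.ofReal_ne_top)]
  congr 1
  ext β
  have hw := wt_nonneg β
  rw [ENNReal.toReal_ofReal (by positivity)]
  rfl

lemma fin_le {d : ℕ} (h : (Fin d → ℕ) → SchwartzMap (Eu d) ℝ)
    (hh : ∀ β x, h β x = hermiteFunMulti d β x) (s : ℕ) (ψ : SchwartzMap (Eu d) ℝ)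
    (F : Finset (Fin d → ℕ)) :
    ∑ β ∈ F, wt d β ^ s * hermCoeff d ψ β ^ 2 ≤ (W s ψ).toReal := by
  have nn : ∀ β, 0 ≤ wt d β ^ s * hermCoeff d ψ β ^ 2 := fun β => by
    have := wt_nonneg β
    positivity
  rw [← ENNReal.toReal_ofReal (Finset.sum_nonneg fun β _ => nn β)]
  refine ENNReal.toReal_mono (W_ne_top h hh s ψ) ?_
  rw [ENNReal.ofReal_sum_of_nonneg fun β _ => nn β]
  exact ENNReal.sum_le_tsum F

lemma main_pos {d : ℕ} (hd : 0 < d) (h : (Fin d → ℕ) → SchwartzMap (Eu d) ℝ)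
    (hh : ∀ β x, h β x = hermiteFunMulti d β x) (T : SchwartzMap (Eu d) ℝ →L[ℝ] ℝ) :
    ∃ q : ℕ, Summable (fun γ => (wt d γ ^ (2 * q))⁻¹ * (T (h γ)) ^ 2) ∧
      ∃ P : Polynomial ℝ, (∀ k, 0 ≤ P.coeff k) ∧
        ∀ (F : Finset (Fin d → ℕ)) (x : Eu d) (φ : SchwartzMap (Eu d) ℝ),
          |∑ γ ∈ F, T (h γ) * ∫ y, hermiteFunMulti d γ y * φ (y + x)| ≤
            P.eval ‖x‖ * Real.sqrt (∑' γ, (wt d γ ^ (2 * q))⁻¹ * (T (h γ)) ^ 2) *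
              hermNorm d q (fun z => φ z) := by
  obtain ⟨C, m, hC, hT⟩ := T_bound h hh T hd
  have wpos : ∀ γ, 0 < wt d γ := fun γ => lt_of_lt_of_le one_pos (one_le_wt hd γ)
  have hsum : Summable (fun γ => (wt d γ ^ (2 * (m + d)))⁻¹ * (T (h γ)) ^ 2) := by
    refine Summable.of_nonneg_of_le (fun γ => ?_) (fun γ => ?_) ((summable_wt d).mul_left (C ^ 2))
    · have := wpos γ
      positivity
    · have hw := wpos γ
      have h1 : T (h γ) ^ 2 ≤ (C * wt d γ ^ m) ^ 2 := by
        rw [← sq_abs]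
        gcongr
        exact hT γ
      calc _ ≤ (wt d γ ^ (2 * (m + d)))⁻¹ * (C * wt d γ ^ m) ^ 2 := by gcongr
        _ = _ := by
          field_simp
          ring
  refine ⟨m + d, hsum, 1 + TP d (2 * (m + d)), fun k => ?_, fun F x φ => ?_⟩
  · rw [Polynomial.coeff_add]
    refine add_nonneg ?_ (TP_coeff _ _ k)
    rw [Polynomial.coeff_one]
    split_ifs <;> norm_num
  · set q := m + d
    set N := ∑' γ, (wt d γ ^ (2 * q))⁻¹ * (T (h γ)) ^ 2 with hN
    set A := (TP d (2 * q)).eval ‖x‖ with hA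
    have hA0 : 0 ≤ A := TP_eval_nonneg _ _ _
    have e1 : ∀ γ, ∫ y, hermiteFunMulti d γ y * φ (y + x) = hermCoeff d (tr x φ) γ := by
      intro γ
      simp only [hermCoeff, tr_apply, mul_comm]
    have b1 : ∑ γ ∈ F, (wt d γ ^ (2 * q))⁻¹ * (T (h γ)) ^ 2 ≤ N :=
      hsum.sum_le_tsum F fun γ _ => by
        have := wpos γ
        positivity
    have b2 : (W (2 * q) (tr x φ)).toReal ≤ A * (W (2 * q) φ).toReal := by
      have := ENNReal.toReal_mono (ENNReal.mul_ne_top ENNReal.ofReal_ne_top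
        (W_ne_top h hh (2 * q) φ)) (W_tr hd h hh x (2 * q) φ)
      rwa [ENNReal.toReal_mul, ENNReal.toReal_ofReal hA0] at this
    have b3 := fin_le h hh (2 * q) (tr x φ) F
    have cs : |∑ γ ∈ F, T (h γ) * hermCoeff d (tr x φ) γ| ≤
        Real.sqrt (∑ γ ∈ F, (wt d γ ^ (2 * q))⁻¹ * (T (h γ)) ^ 2) *
          Real.sqrt (∑ γ ∈ F, wt d γ ^ (2 * q) * hermCoeff d (tr x φ) γ ^ 2) := by
      rw [← Real.sqrt_mul (Finset.sum_nonneg fun γ _ => by have := wpos γ; positivity)]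
      apply Real.abs_le_sqrt
      have := Finset.sum_mul_sq_le_sq_mul_sq F (fun γ => (wt d γ ^ q)⁻¹ * T (h γ))
        (fun γ => wt d γ ^ q * hermCoeff d (tr x φ) γ)
      have f1 : ∀ γ, (wt d γ ^ q)⁻¹ * T (h γ) * (wt d γ ^ q * hermCoeff d (tr x φ) γ) =
          T (h γ) * hermCoeff d (tr x φ) γ := fun γ => by
        have := (wpos γ).ne'
        field_simp
      have f2 : ∀ γ, ((wt d γ ^ q)⁻¹ * T (h γ)) ^ 2 = (wt d γ ^ (2 * q))⁻¹ * T (h γ) ^ 2 :=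
        fun γ => by rw [mul_pow, inv_pow, ← pow_mul, mul_comm q 2]
      have f3 : ∀ γ, (wt d γ ^ q * hermCoeff d (tr x φ) γ) ^ 2 =
          wt d γ ^ (2 * q) * hermCoeff d (tr x φ) γ ^ 2 :=
        fun γ => by rw [mul_pow, ← pow_mul, mul_comm q 2]
      simpa only [f1, f2, f3] using this
    have hs : Real.sqrt A ≤ 1 + A := by
      rw [Real.sqrt_le_left (by positivity)]
      nlinarith
    simp only [e1]
    rw [W_toReal, Polynomial.eval_add, Polynomial.eval_one]
    calc _ ≤ _ := cs
      _ ≤ Real.sqrt N * Real.sqrt (A * (W (2 * q) φ).toReal) := by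
        gcongr
        exact b3.trans b2
      _ = Real.sqrt A * Real.sqrt N * Real.sqrt (W (2 * q) φ).toReal := by
        rw [Real.sqrt_mul hA0]; ring
      _ ≤ _ := by gcongr

lemma main_zero (h : (Fin 0 → ℕ) → SchwartzMap (Eu 0) ℝ) (T : SchwartzMap (Eu 0) ℝ →L[ℝ] ℝ) :
    ∃ q : ℕ, Summable (fun γ => (wt 0 γ ^ (2 * q))⁻¹ * (T (h γ)) ^ 2) ∧
      ∃ P : Polynomial ℝ, (∀ k, 0 ≤ P.coeff k) ∧
        ∀ (F : Finset (Fin 0 → ℕ)) (x : Eu 0) (φ : SchwartzMap (Eu 0) ℝ),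
          |∑ γ ∈ F, T (h γ) * ∫ y, hermiteFunMulti 0 γ y * φ (y + x)| ≤
            P.eval ‖x‖ * Real.sqrt (∑' γ, (wt 0 γ ^ (2 * q))⁻¹ * (T (h γ)) ^ 2) *
              hermNorm 0 q (fun z => φ z) := by
  refine ⟨0, (hasSum_fintype _).summable, 1, fun k => ?_, fun F x φ => ?_⟩
  · rw [Polynomial.coeff_one]
    split_ifs <;> norm_num
  · have e1 : ∀ γ, ∫ y, hermiteFunMulti 0 γ y * φ (y + x) = hermCoeff 0 φ γ := by
      intro γ
      have : x = 0 := Subsingleton.elim _ _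
      simp only [hermCoeff, this, add_zero, mul_comm]
    simp only [e1, hermNorm, tsum_fintype, Finset.univ_unique, Finset.sum_singleton, mul_zero,
      pow_zero, inv_one, one_mul, Polynomial.eval_one, Real.sqrt_sq_eq_abs]
    rw [← abs_mul]
    rcases Finset.eq_empty_or_nonempty F with rfl | hF
    · simp; positivity
    · obtain ⟨a, ha⟩ := hF
      have hFa : F = {a} := by
        ext b
        have e2 : b = a := Subsingleton.elim _ _
        exact ⟨fun _ => Finset.mem_singleton.2 e2, fun _ => e2 ▸ ha⟩
      rw [hFa, Finset.sum_singleton]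
      refine le_of_eq ?_
      congr 2
      · exact congrArg (fun z => T (h z)) (Subsingleton.elim _ _)

end HB

/-- For a tempered distribution `T` there are `q` with `‖T‖_{-q} < ∞` and a
polynomial `P` with nonnegative coefficients such that every finite partial sum
of the translated Hermite expansion satisfies
`|Σ_{γ∈F} T(h_γ) ∫ h_γ(y) φ(y+x) dy| ≤ P(|x|) ‖T‖_{-q} |φ|_q`. -/
theorem hermite_partial_sums_uniform_bound (d : ℕ)
    (h : (Fin d → ℕ) → SchwartzMap (EuclideanSpace ℝ (Fin d)) ℝ)
    (hh : ∀ β x, h β x = hermiteFunMulti d β x)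
    (T : SchwartzMap (EuclideanSpace ℝ (Fin d)) ℝ →L[ℝ] ℝ) :
    ∃ q : ℕ,
      Summable (fun γ : Fin d → ℕ =>
        ((((2 * ∑ i, γ i) + d : ℕ) : ℝ) ^ (2 * q))⁻¹ * (T (h γ)) ^ 2) ∧
      ∃ P : Polynomial ℝ, (∀ k, 0 ≤ P.coeff k) ∧
        ∀ (F : Finset (Fin d → ℕ)) (x : EuclideanSpace ℝ (Fin d))
          (φ : SchwartzMap (EuclideanSpace ℝ (Fin d)) ℝ),
          |∑ γ ∈ F, T (h γ) * ∫ y, hermiteFunMulti d γ y * φ (y + x)| ≤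
            P.eval ‖x‖ *
              Real.sqrt (∑' γ : Fin d → ℕ,
                ((((2 * ∑ i, γ i) + d : ℕ) : ℝ) ^ (2 * q))⁻¹ * (T (h γ)) ^ 2) *
              hermNorm d q (fun z => φ z) := by
  rcases Nat.eq_zero_or_pos d with rfl | hd
  · exact HB.main_zero h T
  · exact HB.main_pos hd h hh T
end

section
/- Let (Ω, F, ℙ) be a probability space and let X : Ω → ℝ^d be a random variable with 𝔼(|X|^n) < ∞ for every n ∈ ℕ. Let φ be in the Schwartz space S(ℝ^d) and define ψ(y) := 𝔼(φ(y − X)) = ∫_Ω φ(y − X(ω)) dℙ(ω). Then ψ is again a Schwartz function, and for every n ∈ ℕ there exists a polynomial P_n with nonnegative coefficients (independent of φ and X) such that |ψ|_n ≤ 𝔼(P_n(|X|)) · |φ|_n. -/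
open MeasureTheory

/-! ### The averaged function is Schwartz -/

section SchwartzPart

variable {Ω : Type} [MeasurableSpace Ω] (μ : Measure Ω) [IsProbabilityMeasure μ]

lemma schwartz_comp_integrable {E F : Type} [NormedAddCommGroup E] [NormedSpace ℝ E]
    [FiniteDimensional ℝ E] [MeasurableSpace E] [BorelSpace E]
    [NormedAddCommGroup F] [NormedSpace ℝ F] (X : Ω → E) (hX : Measurable X)
    (f : SchwartzMap E F) (y : E) : Integrable (fun ω => f (y - X ω)) μ := by
  obtain ⟨C, hC⟩ := f.decay 0 0
  refine Integrable.of_bound (C := C) ?_ (ae_of_all _ fun ω => ?_)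
  · have : StronglyMeasurable (f : E → F) := f.continuous.stronglyMeasurable
    exact (this.comp_measurable (measurable_const.sub hX)).aestronglyMeasurable
  · simpa using hC.2 (y - X ω)

lemma schwartz_avg_hasFDerivAt {E F : Type} [NormedAddCommGroup E] [NormedSpace ℝ E]
    [FiniteDimensional ℝ E] [MeasurableSpace E] [BorelSpace E]
    [NormedAddCommGroup F] [NormedSpace ℝ F] (X : Ω → E) (hX : Measurable X)
    (f : SchwartzMap E F) (y : E) :
    HasFDerivAt (fun y => ∫ ω, f (y - X ω) ∂μ)
      (∫ ω, SchwartzMap.fderivCLM ℝ E F f (y - X ω) ∂μ) y := by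
  obtain ⟨C, hC⟩ := (SchwartzMap.fderivCLM ℝ E F f).decay 0 0
  refine hasFDerivAt_integral_of_dominated_of_fderiv_le (s := Set.univ) (bound := fun _ => C)
    (F' := fun y ω => SchwartzMap.fderivCLM ℝ E F f (y - X ω)) Filter.univ_mem
    (Filter.Eventually.of_forall fun z => (schwartz_comp_integrable μ X hX f z).1)
    (schwartz_comp_integrable μ X hX f y)
    (schwartz_comp_integrable μ X hX (SchwartzMap.fderivCLM ℝ E F f) y).1
    (ae_of_all _ fun ω z _ => ?_) (integrable_const C) (ae_of_all _ fun ω z _ => ?_)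
  · simpa using hC.2 (z - X ω)
  · have := (f.hasFDerivAt (z - X ω)).comp z ((hasFDerivAt_id z).sub_const (X ω))
    simpa [Function.comp_def] using this

lemma schwartz_avg_contDiff {E : Type} [NormedAddCommGroup E] [NormedSpace ℝ E]
    [FiniteDimensional ℝ E] [MeasurableSpace E] [BorelSpace E] (X : Ω → E) (hX : Measurable X)
    (n : ℕ) : ∀ {F : Type} [NormedAddCommGroup F] [NormedSpace ℝ F]
    (f : SchwartzMap E F), ContDiff ℝ n (fun y => ∫ ω, f (y - X ω) ∂μ) := by
  induction n with
  | zero =>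
    intro F _ _ f
    exact contDiff_zero.2 (continuous_iff_continuousAt.2 fun y =>
      (schwartz_avg_hasFDerivAt μ X hX f y).continuousAt)
  | succ n ih =>
    intro F _ _ f
    rw [show ((n + 1 : ℕ) : WithTop ℕ∞) = (n : WithTop ℕ∞) + 1 by push_cast; rfl,
      contDiff_succ_iff_fderiv]
    refine ⟨fun y => (schwartz_avg_hasFDerivAt μ X hX f y).differentiableAt, by simp, ?_⟩
    have : fderiv ℝ (fun y => ∫ ω, f (y - X ω) ∂μ) =
        fun y => ∫ ω, SchwartzMap.fderivCLM ℝ E F f (y - X ω) ∂μ :=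
      funext fun y => (schwartz_avg_hasFDerivAt μ X hX f y).fderiv
    rw [this]
    exact ih _

lemma schwartz_avg_decay {E : Type} [NormedAddCommGroup E] [NormedSpace ℝ E]
    [FiniteDimensional ℝ E] [MeasurableSpace E] [BorelSpace E] (X : Ω → E) (hX : Measurable X)
    (hm : ∀ k : ℕ, Integrable (fun ω => ‖X ω‖ ^ k) μ)
    (p n : ℕ) : ∀ {F : Type} [NormedAddCommGroup F] [NormedSpace ℝ F]
    (f : SchwartzMap E F), ∃ C : ℝ, ∀ y,
      ‖y‖ ^ p * ‖iteratedFDeriv ℝ n (fun y => ∫ ω, f (y - X ω) ∂μ) y‖ ≤ C := by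
  induction n with
  | zero =>
    intro F _ _ f
    obtain ⟨C, hC⟩ := f.decay 0 0
    obtain ⟨D, hD⟩ := f.decay p 0
    have hC' : ∀ y, ‖f y‖ ≤ C := fun y => by simpa using hC.2 y
    have hD' : ∀ y, ‖y‖ ^ p * ‖f y‖ ≤ D := fun y => by simpa using hD.2 y
    refine ⟨∫ ω, 2 ^ p * (D + ‖X ω‖ ^ p * C) ∂μ, fun y => ?_⟩
    rw [norm_iteratedFDeriv_zero]
    calc ‖y‖ ^ p * ‖∫ ω, f (y - X ω) ∂μ‖
        ≤ ‖y‖ ^ p * ∫ ω, ‖f (y - X ω)‖ ∂μ := by gcongr; exact norm_integral_le_integral_norm _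
      _ = ∫ ω, ‖y‖ ^ p * ‖f (y - X ω)‖ ∂μ := by rw [integral_const_mul]
      _ ≤ _ := by
        apply integral_mono ((schwartz_comp_integrable μ X hX f y).norm.const_mul _)
        · exact ((integrable_const D).add ((hm p).mul_const C)).const_mul _
        · intro ω
          simp only
          have h1 : ‖y‖ ≤ ‖y - X ω‖ + ‖X ω‖ := by
            simpa using norm_add_le (y - X ω) (X ω)
          have h2 : ‖y‖ ^ p ≤ 2 ^ p * (‖y - X ω‖ ^ p + ‖X ω‖ ^ p) := by
            have h3 : ‖y‖ ≤ 2 * max ‖y - X ω‖ ‖X ω‖ := by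
              have := le_max_left ‖y - X ω‖ ‖X ω‖
              have := le_max_right ‖y - X ω‖ ‖X ω‖
              linarith
            have h4 : (max ‖y - X ω‖ ‖X ω‖) ^ p ≤ ‖y - X ω‖ ^ p + ‖X ω‖ ^ p := by
              rcases max_choice ‖y - X ω‖ ‖X ω‖ with h | h <;> rw [h]
              · have : 0 ≤ ‖X ω‖ ^ p := by positivity
                linarith
              · have : 0 ≤ ‖y - X ω‖ ^ p := by positivity
                linarith
            calc ‖y‖ ^ p ≤ (2 * max ‖y - X ω‖ ‖X ω‖) ^ p := by gcongr
              _ = 2 ^ p * (max ‖y - X ω‖ ‖X ω‖) ^ p := mul_pow _ _ _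
              _ ≤ _ := by gcongr
          calc ‖y‖ ^ p * ‖f (y - X ω)‖
              ≤ 2 ^ p * (‖y - X ω‖ ^ p + ‖X ω‖ ^ p) * ‖f (y - X ω)‖ := by gcongr
            _ = 2 ^ p * (‖y - X ω‖ ^ p * ‖f (y - X ω)‖ + ‖X ω‖ ^ p * ‖f (y - X ω)‖) := by ring
            _ ≤ _ := by
              gcongr
              · exact hD' _
              · exact hC' _
  | succ n ih =>
    intro F _ _ f
    obtain ⟨C, hC⟩ := ih (SchwartzMap.fderivCLM ℝ E F f)
    refine ⟨C, fun y => ?_⟩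
    have : fderiv ℝ (fun y => ∫ ω, f (y - X ω) ∂μ) =
        fun y => ∫ ω, SchwartzMap.fderivCLM ℝ E F f (y - X ω) ∂μ :=
      funext fun y => (schwartz_avg_hasFDerivAt μ X hX f y).fderiv
    rw [← norm_iteratedFDeriv_fderiv, this]
    exact hC y

lemma schwartz_avg_exists {E F : Type} [NormedAddCommGroup E] [NormedSpace ℝ E]
    [FiniteDimensional ℝ E] [MeasurableSpace E] [BorelSpace E]
    [NormedAddCommGroup F] [NormedSpace ℝ F] (X : Ω → E) (hX : Measurable X)
    (hm : ∀ k : ℕ, Integrable (fun ω => ‖X ω‖ ^ k) μ) (f : SchwartzMap E F) :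
    ∃ Ψ : SchwartzMap E F, ∀ y, Ψ y = ∫ ω, f (y - X ω) ∂μ :=
  ⟨{ toFun := fun y => ∫ ω, f (y - X ω) ∂μ
     smooth' := contDiff_infty.2 fun n => schwartz_avg_contDiff μ X hX n f
     decay' := fun p n => schwartz_avg_decay μ X hX hm p n f }, fun _ => rfl⟩

end SchwartzPart

/-! ### One-dimensional Hermite functions -/

lemma hermitePoly_eq (n : ℕ) (x : ℝ) :
    hermitePoly n x = Polynomial.aeval x (Polynomial.hermite n) := by
  rw [Polynomial.hermite_eq_deriv_gaussian', hermitePoly, iteratedDeriv_eq_iterate]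
  ring

lemma derivative_hermite_succ (n : ℕ) :
    Polynomial.derivative (Polynomial.hermite (n + 1)) =
      (n + 1 : Polynomial ℤ) * Polynomial.hermite n := by
  induction n with
  | zero => simp
  | succ n ih =>
    rw [Polynomial.hermite_succ (n + 1), Polynomial.derivative_sub, Polynomial.derivative_mul, ih]
    have h2 : Polynomial.derivative ((n + 1 : Polynomial ℤ) * Polynomial.hermite n)
        = (n + 1 : Polynomial ℤ) * Polynomial.derivative (Polynomial.hermite n) := by
      rw [Polynomial.derivative_mul]; simp
    rw [h2, Polynomial.hermite_succ n]
    simp only [Polynomial.derivative_X]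
    push_cast
    ring

lemma hermitePoly_zero (x : ℝ) : hermitePoly 0 x = 1 := by simp [hermitePoly_eq]

lemma hermitePoly_hasDerivAt (n : ℕ) (x : ℝ) :
    HasDerivAt (hermitePoly n) (n * hermitePoly (n - 1) x) x := by
  have h0 : hermitePoly n = fun x => Polynomial.aeval x (Polynomial.hermite n) :=
    funext (hermitePoly_eq n)
  rw [h0]
  convert! (Polynomial.hermite n).hasDerivAt_aeval x using 1
  cases n with
  | zero => simp
  | succ n => rw [derivative_hermite_succ]; simp [hermitePoly_eq, -Polynomial.hermite_succ]

lemma hermitePoly_succ (n : ℕ) (x : ℝ) :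
    hermitePoly (n + 1) x = x * hermitePoly n x - n * hermitePoly (n - 1) x := by
  rw [hermitePoly_eq, Polynomial.hermite_succ]
  cases n with
  | zero => simp [hermitePoly_eq]
  | succ n => rw [derivative_hermite_succ]; simp [hermitePoly_eq, -Polynomial.hermite_succ]

noncomputable def hermC (n : ℕ) : ℝ := (Real.sqrt (Real.sqrt (2 * Real.pi) * n.factorial))⁻¹

lemma hermC_succ (n : ℕ) : Real.sqrt (n + 1) * hermC (n + 1) = hermC n := by
  unfold hermC
  have h1 : (((n + 1).factorial : ℕ) : ℝ) = (n + 1) * n.factorial := by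
    rw [Nat.factorial_succ]; push_cast; ring
  rw [h1, show Real.sqrt (2 * Real.pi) * ((n + 1) * n.factorial) =
    (n + 1) * (Real.sqrt (2 * Real.pi) * n.factorial) by ring, Real.sqrt_mul (by positivity)]
  have : Real.sqrt ((n : ℝ) + 1) ≠ 0 := by positivity
  field_simp

lemma hermC_pred (n : ℕ) : (n : ℝ) * hermC n = Real.sqrt n * hermC (n - 1) := by
  cases n with
  | zero => simp
  | succ n =>
    have h := hermC_succ n
    simp only [Nat.add_sub_cancel]
    rw [← h]
    push_cast
    rw [← mul_assoc, Real.mul_self_sqrt (by positivity)]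

lemma hermiteFun_eq (n : ℕ) (x : ℝ) :
    hermiteFun n x = hermC n * Real.exp (-(x ^ 2 / 4)) * hermitePoly n x := rfl

lemma hermiteFun_mul_x (n : ℕ) (x : ℝ) :
    x * hermiteFun n x =
      Real.sqrt (n + 1) * hermiteFun (n + 1) x + Real.sqrt n * hermiteFun (n - 1) x := by
  simp only [hermiteFun_eq, hermitePoly_succ]
  linear_combination (-Real.exp (-(x ^ 2 / 4)) * (x * hermitePoly n x - n * hermitePoly (n - 1) x))
    * hermC_succ n + Real.exp (-(x ^ 2 / 4)) * hermitePoly (n - 1) x * hermC_pred n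

lemma hermiteFun_hasDerivAt (n : ℕ) (x : ℝ) :
    HasDerivAt (hermiteFun n)
      ((Real.sqrt n * hermiteFun (n - 1) x - Real.sqrt (n + 1) * hermiteFun (n + 1) x) / 2) x := by
  have h1 : HasDerivAt (fun x : ℝ => Real.exp (-(x ^ 2 / 4)))
      (Real.exp (-(x ^ 2 / 4)) * (-(x / 2))) x := by
    apply HasDerivAt.exp
    have := ((hasDerivAt_pow 2 x).div_const 4).neg
    convert! this using 1
    norm_num; ring
  have h2 := (h1.const_mul (hermC n)).mul (hermitePoly_hasDerivAt n x)
  have h3 : hermiteFun n = fun x => (hermC n * Real.exp (-(x ^ 2 / 4))) * hermitePoly n x := rfl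
  rw [h3]
  refine h2.congr_deriv ?_
  simp only [hermiteFun_eq, hermitePoly_succ]
  linear_combination (Real.exp (-(x ^ 2 / 4)) * (x * hermitePoly n x - n * hermitePoly (n - 1) x))
    * hermC_succ n / 2 + Real.exp (-(x ^ 2 / 4)) * hermitePoly (n - 1) x * hermC_pred n / 2

lemma hermiteFun_continuous (n : ℕ) : Continuous (hermiteFun n) :=
  continuous_iff_continuousAt.2 fun x => (hermiteFun_hasDerivAt n x).continuousAt

lemma poly_gauss_bound (p : Polynomial ℝ) :
    ∃ C : ℝ, 0 ≤ C ∧ ∀ x : ℝ, |p.eval x| * Real.exp (-(x ^ 2 / 8)) ≤ C := by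
  induction p using Polynomial.induction_on' with
  | add p q hp hq =>
    obtain ⟨C, hC, h⟩ := hp
    obtain ⟨D, hD, h'⟩ := hq
    refine ⟨C + D, by positivity, fun x => ?_⟩
    rw [Polynomial.eval_add]
    have := abs_add_le (p.eval x) (q.eval x)
    have e := Real.exp_pos (-(x ^ 2 / 8))
    nlinarith [h x, h' x]
  | monomial k a =>
    refine ⟨|a| * (k.factorial * Real.exp 2), by positivity, fun x => ?_⟩
    rw [Polynomial.eval_monomial, abs_mul, mul_assoc, abs_pow]
    refine mul_le_mul_of_nonneg_left ?_ (abs_nonneg a)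
    have h1 := Real.pow_div_factorial_le_exp (|x|) (abs_nonneg x) k
    rw [div_le_iff₀ (by positivity)] at h1
    have h2 : Real.exp |x| * Real.exp (-(x ^ 2 / 8)) ≤ Real.exp 2 := by
      rw [← Real.exp_add, Real.exp_le_exp]
      nlinarith [sq_abs x, sq_nonneg (|x| - 4)]
    calc |x| ^ k * Real.exp (-(x ^ 2 / 8))
        ≤ (Real.exp |x| * k.factorial) * Real.exp (-(x ^ 2 / 8)) := by gcongr
      _ = k.factorial * (Real.exp |x| * Real.exp (-(x ^ 2 / 8))) := by ring
      _ ≤ _ := mul_le_mul_of_nonneg_left h2 (by positivity)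

lemma hermiteFun_bound (n : ℕ) :
    ∃ C : ℝ, 0 ≤ C ∧ ∀ x : ℝ, |hermiteFun n x| ≤ C * Real.exp (-(x ^ 2 / 8)) := by
  obtain ⟨C, hC, h⟩ := poly_gauss_bound ((Polynomial.hermite n).map (Int.castRingHom ℝ))
  refine ⟨|hermC n| * C, by positivity, fun x => ?_⟩
  have h1 : hermitePoly n x = ((Polynomial.hermite n).map (Int.castRingHom ℝ)).eval x := by
    rw [hermitePoly_eq, Polynomial.aeval_def, Polynomial.eval_map]; rfl
  rw [hermiteFun_eq, h1, abs_mul, abs_mul, Real.abs_exp,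
    show -(x ^ 2 / 4) = -(x ^ 2 / 8) + -(x ^ 2 / 8) by ring, Real.exp_add]
  have e := Real.exp_pos (-(x ^ 2 / 8))
  have := mul_le_mul_of_nonneg_left (h x) (mul_nonneg (abs_nonneg (hermC n)) e.le)
  linarith

lemma hermiteFun_bdd (n : ℕ) : ∃ C : ℝ, 0 ≤ C ∧ ∀ x : ℝ, |hermiteFun n x| ≤ C := by
  obtain ⟨C, hC, h⟩ := hermiteFun_bound n
  refine ⟨C, hC, fun x => (h x).trans ?_⟩
  have : Real.exp (-(x ^ 2 / 8)) ≤ 1 := Real.exp_le_one_iff.2 (by nlinarith [sq_nonneg x])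
  nlinarith

lemma hermiteFun_integrable (n : ℕ) : Integrable (hermiteFun n) := by
  obtain ⟨C, hC, h⟩ := hermiteFun_bound n
  have h1 : Integrable fun x : ℝ => C * Real.exp (-(1 / 8) * x ^ 2) :=
    (integrable_exp_neg_mul_sq (by norm_num)).const_mul C
  refine h1.mono' (hermiteFun_continuous n).aestronglyMeasurable (ae_of_all _ fun x => ?_)
  rw [Real.norm_eq_abs, show -(1 / 8) * x ^ 2 = -(x ^ 2 / 8) by ring]
  exact h x

lemma hermiteFun_mul_integrable (m n : ℕ) :
    Integrable (fun x => hermiteFun m x * hermiteFun n x) := by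
  obtain ⟨C, hC, h⟩ := hermiteFun_bdd m
  exact (hermiteFun_integrable n).bdd_mul (hermiteFun_continuous m).aestronglyMeasurable
    (ae_of_all _ h)

lemma hermiteFun_norm_sq (n : ℕ) : ∫ x, hermiteFun n x * hermiteFun n x = 1 := by
  induction n with
  | zero =>
    have h1 : ∀ x, hermiteFun 0 x * hermiteFun 0 x
        = (Real.sqrt (2 * Real.pi))⁻¹ * Real.exp (-(1 / 2) * x ^ 2) := by
      intro x
      rw [hermiteFun_eq, hermitePoly_zero]
      have : hermC 0 * hermC 0 = (Real.sqrt (2 * Real.pi))⁻¹ := by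
        unfold hermC
        rw [← mul_inv, Real.mul_self_sqrt (by positivity)]; simp
      rw [← this, show -(1 / 2) * x ^ 2 = -(x ^ 2 / 4) + -(x ^ 2 / 4) by ring, Real.exp_add]
      ring
    simp_rw [h1]
    rw [integral_const_mul, integral_gaussian, show Real.pi / (1 / 2) = 2 * Real.pi by ring]
    have : Real.sqrt (2 * Real.pi) ≠ 0 := by positivity
    field_simp
  | succ n ih =>
    have I := hermiteFun_mul_integrable
    have ibp := integral_mul_deriv_eq_deriv_mul_of_integrable
      (u := hermiteFun (n + 1)) (v := hermiteFun n)
      (fun x _ => hermiteFun_hasDerivAt (n + 1) x) (fun x _ => hermiteFun_hasDerivAt n x)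
      (by
        have := (((I (n + 1) (n - 1)).const_mul (Real.sqrt n)).sub
          ((I (n + 1) (n + 1)).const_mul (Real.sqrt (n + 1)))).div_const 2
        refine this.congr (ae_of_all _ fun x => ?_)
        simp; ring)
      (by
        have := (((I n n).const_mul (Real.sqrt (n + 1 : ℕ))).sub
          ((I (n + 2) n).const_mul (Real.sqrt ((n + 1 : ℕ) + 1)))).div_const 2
        refine this.congr (ae_of_all _ fun x => ?_)
        simp; ring)
      (I (n + 1) n)
    have e1 : ∫ x, hermiteFun (n + 1) x * ((Real.sqrt n * hermiteFun (n - 1) x -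
        Real.sqrt (n + 1) * hermiteFun (n + 1) x) / 2)
        = (Real.sqrt n * (∫ x, hermiteFun (n + 1) x * hermiteFun (n - 1) x) -
          Real.sqrt (n + 1) * (∫ x, hermiteFun (n + 1) x * hermiteFun (n + 1) x)) / 2 := by
      rw [← integral_const_mul, ← integral_const_mul, ← integral_sub
        ((I _ _).const_mul _) ((I _ _).const_mul _), ← integral_div]
      congr 1; ext x; ring
    have e2 : ∫ x, ((Real.sqrt (n + 1 : ℕ) * hermiteFun (n + 1 - 1) x -
        Real.sqrt ((n + 1 : ℕ) + 1) * hermiteFun (n + 1 + 1) x) / 2) * hermiteFun n x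
        = (Real.sqrt (n + 1) * (∫ x, hermiteFun n x * hermiteFun n x) -
          Real.sqrt ((n + 1 : ℕ) + 1) * (∫ x, hermiteFun (n + 2) x * hermiteFun n x)) / 2 := by
      rw [← integral_const_mul, ← integral_const_mul, ← integral_sub
        ((I _ _).const_mul _) ((I _ _).const_mul _), ← integral_div]
      congr 1; ext x; simp only [Nat.add_sub_cancel]; push_cast; ring
    have e3 : Real.sqrt n * (∫ x, hermiteFun (n + 1) x * hermiteFun (n - 1) x) +
          Real.sqrt (n + 1) * (∫ x, hermiteFun (n + 1) x * hermiteFun (n + 1) x)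
        = (Real.sqrt (n + 1) * (∫ x, hermiteFun n x * hermiteFun n x) +
          Real.sqrt ((n + 1 : ℕ) + 1) * (∫ x, hermiteFun (n + 2) x * hermiteFun n x)) := by
      rw [← integral_const_mul, ← integral_const_mul, ← integral_add
        ((I _ _).const_mul _) ((I _ _).const_mul _), ← integral_const_mul, ← integral_const_mul,
        ← integral_add ((I _ _).const_mul _) ((I _ _).const_mul _)]
      congr 1; ext x
      have a1 := hermiteFun_mul_x n x
      have a2 := hermiteFun_mul_x (n + 1) x
      simp only [Nat.add_sub_cancel] at a2
      push_cast at a2 ⊢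
      linear_combination (-hermiteFun (n + 1) x) * a1 + hermiteFun n x * a2
    rw [e1, e2, ih] at ibp
    rw [ih] at e3
    have h0 : Real.sqrt ((n : ℝ) + 1) ≠ 0 := by positivity
    apply mul_left_cancel₀ h0
    linarith

/-! ### Multi-dimensional Hermite functions and translated coefficients -/

def idxUp {d : ℕ} (β : Fin d → ℕ) (i : Fin d) : Fin d → ℕ := Function.update β i (β i + 1)

def idxDn {d : ℕ} (β : Fin d → ℕ) (i : Fin d) : Fin d → ℕ := Function.update β i (β i - 1)

lemma idxUp_idxDn {d : ℕ} (β : Fin d → ℕ) (i : Fin d) (h : β i ≠ 0) : idxUp (idxDn β i) i = β := by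
  unfold idxUp idxDn
  simp [Nat.sub_add_cancel (Nat.one_le_iff_ne_zero.2 h)]

lemma idxDn_idxUp {d : ℕ} (β : Fin d → ℕ) (i : Fin d) : idxDn (idxUp β i) i = β := by
  unfold idxUp idxDn
  simp

lemma hermiteFunMulti_update {d : ℕ} (β : Fin d → ℕ) (i : Fin d) (k : ℕ)
    (y : EuclideanSpace ℝ (Fin d)) :
    hermiteFunMulti d (Function.update β i k) y =
      hermiteFun k (y i) * ∏ j ∈ Finset.univ.erase i, hermiteFun (β j) (y j) := by
  unfold hermiteFunMulti
  rw [← Finset.mul_prod_erase _ _ (Finset.mem_univ i)]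
  simp only [Function.update_self]
  congr 1
  refine Finset.prod_congr rfl fun j hj => ?_
  rw [Function.update_of_ne (Finset.ne_of_mem_erase hj)]

lemma hermiteFunMulti_split {d : ℕ} (β : Fin d → ℕ) (i : Fin d) (y : EuclideanSpace ℝ (Fin d)) :
    hermiteFunMulti d β y =
      hermiteFun (β i) (y i) * ∏ j ∈ Finset.univ.erase i, hermiteFun (β j) (y j) := by
  conv_lhs => rw [← Function.update_eq_self i β]
  exact hermiteFunMulti_update β i (β i) y

lemma hermiteFunMulti_mul_x {d : ℕ} (β : Fin d → ℕ) (i : Fin d) (y : EuclideanSpace ℝ (Fin d)) :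
    y i * hermiteFunMulti d β y = Real.sqrt (β i + 1) * hermiteFunMulti d (idxUp β i) y
      + Real.sqrt (β i) * hermiteFunMulti d (idxDn β i) y := by
  rw [hermiteFunMulti_split β i, idxUp, idxDn, hermiteFunMulti_update, hermiteFunMulti_update]
  linear_combination (∏ j ∈ Finset.univ.erase i, hermiteFun (β j) (y j)) *
    hermiteFun_mul_x (β i) (y i)

/-- the `i`-th partial derivative of the Hermite function -/
noncomputable def hermPartial {d : ℕ} (β : Fin d → ℕ) (i : Fin d)
    (y : EuclideanSpace ℝ (Fin d)) : ℝ :=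
  (Real.sqrt (β i) * hermiteFunMulti d (idxDn β i) y
      - Real.sqrt (β i + 1) * hermiteFunMulti d (idxUp β i) y) / 2

lemma hermiteFunMulti_hasDerivAt {d : ℕ} (β : Fin d → ℕ) (y x : EuclideanSpace ℝ (Fin d)) (t : ℝ) :
    HasDerivAt (fun t : ℝ => hermiteFunMulti d β (y + t • x))
      (∑ i, x i * hermPartial β i (y + t • x)) t := by
  have h1 : ∀ i ∈ (Finset.univ : Finset (Fin d)),
      HasDerivAt (fun t : ℝ => hermiteFun (β i) ((y + t • x) i))
      ((Real.sqrt (β i) * hermiteFun (β i - 1) ((y + t • x) i)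
        - Real.sqrt (β i + 1) * hermiteFun (β i + 1) ((y + t • x) i)) / 2 * x i) t := by
    intro i _
    have h2 : HasDerivAt (fun t : ℝ => (y + t • x) i) (x i) t := by
      have := ((hasDerivAt_id t).mul_const (x i)).const_add (y i)
      simpa using this
    exact (hermiteFun_hasDerivAt (β i) ((y + t • x) i)).comp t h2
  have h3 := HasDerivAt.fun_finsetProd h1
  refine h3.congr_deriv ?_
  refine Finset.sum_congr rfl fun i _ => ?_
  rw [hermPartial, idxUp, idxDn, hermiteFunMulti_update, hermiteFunMulti_update, smul_eq_mul]
  ring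

lemma hermiteFunMulti_continuous {d : ℕ} (β : Fin d → ℕ) : Continuous (hermiteFunMulti d β) := by
  unfold hermiteFunMulti
  refine continuous_finsetProd _ fun i _ => ?_
  have := hermiteFun_continuous (β i)
  fun_prop

lemma hermiteFunMulti_bdd {d : ℕ} (β : Fin d → ℕ) :
    ∃ C : ℝ, 0 ≤ C ∧ ∀ y, |hermiteFunMulti d β y| ≤ C := by
  choose C hC h using hermiteFun_bdd
  refine ⟨∏ i, C (β i), Finset.prod_nonneg fun i _ => hC _, fun y => ?_⟩
  unfold hermiteFunMulti
  rw [Finset.abs_prod]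
  exact Finset.prod_le_prod (fun i _ => abs_nonneg _) fun i _ => h _ _

lemma hermPartial_continuous {d : ℕ} (β : Fin d → ℕ) (i : Fin d) :
    Continuous (hermPartial β i) := by
  unfold hermPartial
  have h1 := hermiteFunMulti_continuous (idxUp β i)
  have h2 := hermiteFunMulti_continuous (idxDn β i)
  fun_prop

lemma hermPartial_bdd {d : ℕ} (β : Fin d → ℕ) (i : Fin d) :
    ∃ C : ℝ, 0 ≤ C ∧ ∀ y, |hermPartial β i y| ≤ C := by
  obtain ⟨C, hC, h⟩ := hermiteFunMulti_bdd (idxDn β i)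
  obtain ⟨D, hD, h'⟩ := hermiteFunMulti_bdd (idxUp β i)
  refine ⟨(Real.sqrt (β i) * C + Real.sqrt (β i + 1) * D) / 2, by positivity, fun y => ?_⟩
  unfold hermPartial
  rw [abs_div, abs_two]
  gcongr
  refine (abs_sub _ _).trans ?_
  rw [abs_mul, abs_mul, abs_of_nonneg (Real.sqrt_nonneg _), abs_of_nonneg (Real.sqrt_nonneg _)]
  gcongr
  · exact h y
  · exact h' y

lemma hermiteFunMulti_sq_integrable {d : ℕ} (β : Fin d → ℕ) :
    Integrable (fun y => hermiteFunMulti d β y * hermiteFunMulti d β y) ∧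
      ∫ y, hermiteFunMulti d β y * hermiteFunMulti d β y = 1 := by
  have e : (fun y : EuclideanSpace ℝ (Fin d) => hermiteFunMulti d β y * hermiteFunMulti d β y) =
      (fun z : Fin d → ℝ => ∏ i, hermiteFun (β i) (z i) * hermiteFun (β i) (z i)) ∘
        (MeasurableEquiv.toLp 2 (Fin d → ℝ)).symm := by
    ext y
    simp [hermiteFunMulti, Finset.prod_mul_distrib]
  have mp := EuclideanSpace.volume_preserving_symm_measurableEquiv_toLp (Fin d)
  constructor
  · rw [e, mp.integrable_comp_emb (MeasurableEquiv.measurableEmbedding _)]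
    exact Integrable.fintype_prod (f := fun i x => hermiteFun (β i) x * hermiteFun (β i) x)
      fun i => hermiteFun_mul_integrable (β i) (β i)
  · rw [e]
    simp only [Function.comp_def]
    rw [mp.integral_comp' (g := fun z : Fin d → ℝ =>
      ∏ i, hermiteFun (β i) (z i) * hermiteFun (β i) (z i)),
      integral_fintype_prod_volume_eq_prod (fun i x => hermiteFun (β i) x * hermiteFun (β i) x)]
    simp [hermiteFun_norm_sq]

/-- Hermite coefficients of the translate of `φ` by `x`. -/
noncomputable def tc {d : ℕ} (φ : SchwartzMap (EuclideanSpace ℝ (Fin d)) ℝ)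
    (x : EuclideanSpace ℝ (Fin d)) (β : Fin d → ℕ) : ℝ :=
  ∫ y, φ y * hermiteFunMulti d β (y + x)

lemma hermCoeff_translate {d : ℕ} (φ : SchwartzMap (EuclideanSpace ℝ (Fin d)) ℝ)
    (x : EuclideanSpace ℝ (Fin d)) (β : Fin d → ℕ) :
    hermCoeff d (fun y => φ (y - x)) β = tc φ x β := by
  unfold hermCoeff tc
  rw [← integral_add_right_eq_self _ x]
  simp

lemma schwartz_mul_bdd_integrable {d : ℕ} (φ : SchwartzMap (EuclideanSpace ℝ (Fin d)) ℝ)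
    (g : EuclideanSpace ℝ (Fin d) → ℝ) (hg : Continuous g) (hb : ∃ C : ℝ, 0 ≤ C ∧ ∀ y, |g y| ≤ C)
    (x : EuclideanSpace ℝ (Fin d)) :
    Integrable (fun y => φ y * g (y + x)) := by
  obtain ⟨C, hC, h⟩ := hb
  have := (φ.integrable (μ := volume)).bdd_mul (f := fun y => g (y + x)) (c := C)
    (by have := hg; exact Continuous.aestronglyMeasurable (by fun_prop)) (ae_of_all _ fun y => h _)
  exact this.congr (ae_of_all _ fun y => mul_comm _ _)

lemma tc_integrable {d : ℕ} (φ : SchwartzMap (EuclideanSpace ℝ (Fin d)) ℝ)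
    (x : EuclideanSpace ℝ (Fin d)) (β : Fin d → ℕ) :
    Integrable (fun y => φ y * hermiteFunMulti d β (y + x)) :=
  schwartz_mul_bdd_integrable φ _ (hermiteFunMulti_continuous β) (hermiteFunMulti_bdd β) x

lemma hermPartial_integral {d : ℕ} (φ : SchwartzMap (EuclideanSpace ℝ (Fin d)) ℝ)
    (x : EuclideanSpace ℝ (Fin d)) (β : Fin d → ℕ) (i : Fin d) :
    ∫ y, φ y * hermPartial β i (y + x) =
      (Real.sqrt (β i) * tc φ x (idxDn β i) - Real.sqrt (β i + 1) * tc φ x (idxUp β i)) / 2 := by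
  unfold tc
  rw [← integral_const_mul, ← integral_const_mul, ← integral_sub
        ((tc_integrable _ _ _).const_mul _) ((tc_integrable _ _ _).const_mul _), ← integral_div]
  congr 1; ext y; unfold hermPartial; ring

lemma tc_hasDerivAt {d : ℕ} (φ : SchwartzMap (EuclideanSpace ℝ (Fin d)) ℝ)
    (x : EuclideanSpace ℝ (Fin d)) (β : Fin d → ℕ) (t : ℝ) :
    HasDerivAt (fun t : ℝ => tc φ (t • x) β)
      (∑ i, x i * ((Real.sqrt (β i) * tc φ (t • x) (idxDn β i)
        - Real.sqrt (β i + 1) * tc φ (t • x) (idxUp β i)) / 2)) t := by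
  choose C hC h using hermPartial_bdd (d := d)
  have key := (hasDerivAt_integral_of_dominated_loc_of_deriv_le (μ := volume) (s := Set.univ)
    (x₀ := t)
    (F := fun t y => φ y * hermiteFunMulti d β (y + t • x))
    (F' := fun t y => φ y * ∑ i, x i * hermPartial β i (y + t • x))
    (bound := fun y => |φ y| * ∑ i, |x i| * C β i) Filter.univ_mem
    (Filter.Eventually.of_forall fun s => (tc_integrable φ (s • x) β).1)
    (tc_integrable φ (t • x) β) ?_ ?_ ?_ ?_).2
  · refine key.congr_deriv ?_
    simp_rw [Finset.mul_sum]
    rw [integral_finsetSum]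
    · refine Finset.sum_congr rfl fun i _ => ?_
      rw [← hermPartial_integral, ← integral_const_mul]
      congr 1; ext y; ring
    · intro i _
      have := (schwartz_mul_bdd_integrable φ _ (hermPartial_continuous β i)
        (hermPartial_bdd β i) (t • x)).const_mul (x i)
      exact this.congr (ae_of_all _ fun y => by simp only; ring)
  · have := hermPartial_continuous β
    exact Continuous.aestronglyMeasurable (by have := φ.continuous; fun_prop)
  · refine ae_of_all _ fun y s _ => ?_
    rw [Real.norm_eq_abs, abs_mul]
    gcongr
    refine (Finset.abs_sum_le_sum_abs _ _).trans (Finset.sum_le_sum fun i _ => ?_)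
    rw [abs_mul]
    gcongr
    exact h β i _
  · exact (φ.integrable (μ := volume)).abs.mul_const _
  · exact ae_of_all _ fun y s _ => (hermiteFunMulti_hasDerivAt β y x s).const_mul _

/-- multiplication by the `i`-th coordinate -/
noncomputable def posOp {d : ℕ} (i : Fin d) (φ : SchwartzMap (EuclideanSpace ℝ (Fin d)) ℝ) :
    SchwartzMap (EuclideanSpace ℝ (Fin d)) ℝ :=
  SchwartzMap.smulLeftCLM ℝ (fun y : EuclideanSpace ℝ (Fin d) =>
    (EuclideanSpace.proj i : EuclideanSpace ℝ (Fin d) →L[ℝ] ℝ) y) φ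

lemma posOp_apply {d : ℕ} (i : Fin d) (φ : SchwartzMap (EuclideanSpace ℝ (Fin d)) ℝ)
    (y : EuclideanSpace ℝ (Fin d)) : posOp i φ y = y i * φ y := by
  unfold posOp
  rw [SchwartzMap.smulLeftCLM_apply_apply (by fun_prop)]
  simp

/-- the `i`-th partial derivative -/
noncomputable def derOp {d : ℕ} (i : Fin d) (φ : SchwartzMap (EuclideanSpace ℝ (Fin d)) ℝ) :
    SchwartzMap (EuclideanSpace ℝ (Fin d)) ℝ :=
  LineDeriv.lineDerivOp (EuclideanSpace.single i (1 : ℝ)) φ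

lemma tc_posOp {d : ℕ} (i : Fin d) (φ : SchwartzMap (EuclideanSpace ℝ (Fin d)) ℝ)
    (x : EuclideanSpace ℝ (Fin d)) (β : Fin d → ℕ) :
    tc (posOp i φ) x β = Real.sqrt (β i + 1) * tc φ x (idxUp β i)
      + Real.sqrt (β i) * tc φ x (idxDn β i) - x i * tc φ x β := by
  unfold tc
  have I := tc_integrable φ x
  have J : Integrable (fun y => Real.sqrt (β i + 1) * (φ y * hermiteFunMulti d (idxUp β i) (y + x))
      + Real.sqrt (β i) * (φ y * hermiteFunMulti d (idxDn β i) (y + x))) :=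
    ((I _).const_mul _).add ((I _).const_mul _)
  rw [← integral_const_mul, ← integral_const_mul, ← integral_const_mul, ← integral_add
        ((I _).const_mul _) ((I _).const_mul _), ← integral_sub J ((I _).const_mul _)]
  congr 1; ext y
  have := hermiteFunMulti_mul_x β i (y + x)
  simp only [PiLp.add_apply] at this
  rw [posOp_apply]
  linear_combination φ y * this

lemma tc_derOp {d : ℕ} (i : Fin d) (φ : SchwartzMap (EuclideanSpace ℝ (Fin d)) ℝ)
    (x : EuclideanSpace ℝ (Fin d)) (β : Fin d → ℕ) :
    tc (derOp i φ) x β =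
      (Real.sqrt (β i + 1) * tc φ x (idxUp β i) - Real.sqrt (β i) * tc φ x (idxDn β i)) / 2 := by
  have key := integral_bilinear_hasLineDerivAt_right_eq_neg_left_of_integrable (μ := volume)
    (f := φ) (f' := derOp i φ) (g := fun y => hermiteFunMulti d β (y + x))
    (g' := fun y => hermPartial β i (y + x)) (v := EuclideanSpace.single i (1 : ℝ))
    (B := ContinuousLinearMap.mul ℝ ℝ) (tc_integrable _ _ _)
    (schwartz_mul_bdd_integrable φ _ (hermPartial_continuous β i) (hermPartial_bdd β i) x)
    (tc_integrable _ _ _) ?_ ?_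
  · simp only [ContinuousLinearMap.mul_apply'] at key
    rw [hermPartial_integral] at key
    unfold tc at key ⊢
    linarith
  · intro y _
    unfold derOp
    rw [SchwartzMap.lineDerivOp_apply]
    exact (φ.differentiableAt.lineDifferentiableAt).hasLineDerivAt
  · intro y _
    unfold HasLineDerivAt
    have := hermiteFunMulti_hasDerivAt β (y + x) (EuclideanSpace.single i (1 : ℝ)) 0
    have e : ∀ t : ℝ, y + t • EuclideanSpace.single i (1 : ℝ) + x
      = y + x + t • EuclideanSpace.single i (1 : ℝ) := fun t => by abel
    simp only [e]
    refine this.congr_deriv ?_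
    simp [PiLp.single_apply]

noncomputable def annOp {d : ℕ} (i : Fin d) (φ : SchwartzMap (EuclideanSpace ℝ (Fin d)) ℝ) :
    SchwartzMap (EuclideanSpace ℝ (Fin d)) ℝ := (1 / 2 : ℝ) • posOp i φ + derOp i φ

noncomputable def creOp {d : ℕ} (i : Fin d) (φ : SchwartzMap (EuclideanSpace ℝ (Fin d)) ℝ) :
    SchwartzMap (EuclideanSpace ℝ (Fin d)) ℝ := (1 / 2 : ℝ) • posOp i φ - derOp i φ

lemma tc_annOp {d : ℕ} (i : Fin d) (φ : SchwartzMap (EuclideanSpace ℝ (Fin d)) ℝ)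
    (x : EuclideanSpace ℝ (Fin d)) (β : Fin d → ℕ) :
    tc (annOp i φ) x β = Real.sqrt (β i + 1) * tc φ x (idxUp β i) - x i / 2 * tc φ x β := by
  have h : tc (annOp i φ) x β = (1 / 2) * tc (posOp i φ) x β + tc (derOp i φ) x β := by
    unfold tc
    rw [← integral_const_mul, ← integral_add ((tc_integrable _ _ _).const_mul _)
      (tc_integrable _ _ _)]
    congr 1; ext y; simp [annOp]; ring
  rw [h, tc_posOp, tc_derOp]; ring

lemma tc_creOp {d : ℕ} (i : Fin d) (φ : SchwartzMap (EuclideanSpace ℝ (Fin d)) ℝ)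
    (x : EuclideanSpace ℝ (Fin d)) (β : Fin d → ℕ) :
    tc (creOp i φ) x β = Real.sqrt (β i) * tc φ x (idxDn β i) - x i / 2 * tc φ x β := by
  have h : tc (creOp i φ) x β = (1 / 2) * tc (posOp i φ) x β - tc (derOp i φ) x β := by
    unfold tc
    rw [← integral_const_mul, ← integral_sub ((tc_integrable _ _ _).const_mul _)
      (tc_integrable _ _ _)]
    congr 1; ext y; simp [creOp]; ring
  rw [h, tc_posOp, tc_derOp]; ring

lemma tc_number {d : ℕ} (i : Fin d) (φ : SchwartzMap (EuclideanSpace ℝ (Fin d)) ℝ)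
    (x : EuclideanSpace ℝ (Fin d)) (β : Fin d → ℕ) :
    (β i : ℝ) * tc φ x β = tc (creOp i (annOp i φ)) x β + x i / 2 * tc (annOp i φ) x β
      + x i / 2 * tc (creOp i φ) x β + (x i) ^ 2 / 4 * tc φ x β := by
  rw [tc_creOp i (annOp i φ), tc_creOp i φ]
  by_cases h : β i = 0
  · simp only [h, Nat.cast_zero, Real.sqrt_zero]; ring
  · rw [tc_annOp i φ x (idxDn β i), idxUp_idxDn β i h]
    have e : ((idxDn β i i : ℕ) : ℝ) + 1 = β i := by
      unfold idxDn
      rw [Function.update_self]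
      have := Nat.sub_add_cancel (Nat.one_le_iff_ne_zero.2 h)
      exact_mod_cast this
    rw [e]
    have := Real.mul_self_sqrt (Nat.cast_nonneg (α := ℝ) (β i))
    linear_combination (-tc φ x β) * this

lemma tc_base {d : ℕ} (φ : SchwartzMap (EuclideanSpace ℝ (Fin d)) ℝ)
    (x : EuclideanSpace ℝ (Fin d)) (β : Fin d → ℕ) :
    |tc φ x β| ≤ ((∫ y, φ y * φ y) + 1) / 2 := by
  have i1 : Integrable (fun y => φ y * φ y) := by
    obtain ⟨C, hC⟩ := φ.decay 0 0
    exact (φ.integrable (μ := volume)).bdd_mul (c := C) φ.continuous.aestronglyMeasurable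
      (ae_of_all _ fun y => by simpa using hC.2 y)
  obtain ⟨i2, e2⟩ := hermiteFunMulti_sq_integrable β
  have i3 := i2.comp_add_right x
  have e3 : ∫ y, hermiteFunMulti d β (y + x) * hermiteFunMulti d β (y + x) = 1 := by
    rw [← e2]
    exact integral_add_right_eq_self (fun y => hermiteFunMulti d β y * hermiteFunMulti d β y) x
  rw [← e3, ← integral_add i1 i3, ← integral_div]
  unfold tc
  refine (abs_integral_le_integral_abs).trans (integral_mono (tc_integrable _ _ _).abs
    ((i1.add i3).div_const 2) fun y => ?_)
  simp only
  rw [abs_le]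
  constructor <;>
  nlinarith [sq_nonneg (φ y - hermiteFunMulti d β (y + x)),
    sq_nonneg (φ y + hermiteFunMulti d β (y + x))]

/-- the eigenvalue weight -/
noncomputable def wt {d : ℕ} (β : Fin d → ℕ) : ℝ := (((2 * ∑ i, β i) + d : ℕ) : ℝ)

lemma wt_nonneg {d : ℕ} (β : Fin d → ℕ) : 0 ≤ wt β := Nat.cast_nonneg _

lemma tc_decay {d : ℕ} (R : ℝ) (hR : 0 ≤ R) (k : ℕ) :
    ∀ φ : SchwartzMap (EuclideanSpace ℝ (Fin d)) ℝ,
    ∃ C : ℝ, 0 ≤ C ∧ ∀ x, ‖x‖ ≤ R → ∀ β, wt β ^ k * |tc φ x β| ≤ C := by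
  induction k with
  | zero =>
    intro φ
    refine ⟨((∫ y, φ y * φ y) + 1) / 2, (abs_nonneg _).trans (tc_base φ 0 0), fun x _ β => ?_⟩
    simpa using tc_base φ x β
  | succ k ih =>
    choose C hC h using ih
    intro φ
    refine ⟨∑ i, 2 * (C (creOp i (annOp i φ)) + R / 2 * C (annOp i φ) + R / 2 * C (creOp i φ)
      + R ^ 2 / 4 * C φ) + d * C φ, ?_, ?_⟩
    · have : ∀ i ∈ (Finset.univ : Finset (Fin d)), 0 ≤ 2 * (C (creOp i (annOp i φ)) +
          R / 2 * C (annOp i φ) + R / 2 * C (creOp i φ) + R ^ 2 / 4 * C φ) := by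
        intro i _
        have := hC (creOp i (annOp i φ))
        have := hC (annOp i φ)
        have := hC (creOp i φ)
        have := hC φ
        positivity
      have := Finset.sum_nonneg this
      have := hC φ
      positivity
    · intro x hx β
      have hw := wt_nonneg β
      have e : wt β ^ (k + 1) * |tc φ x β| =
          ∑ i, 2 * (wt β ^ k * |(β i : ℝ) * tc φ x β|) + d * (wt β ^ k * |tc φ x β|) := by
        have : ∀ i, 2 * (wt β ^ k * |(β i : ℝ) * tc φ x β|)
            = (2 * (β i : ℝ)) * (wt β ^ k * |tc φ x β|) := by
          intro i; rw [abs_mul, Nat.abs_cast]; ring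
        simp_rw [this]
        rw [← Finset.sum_mul, ← add_mul, ← Finset.mul_sum, pow_succ]
        have : wt β = 2 * (∑ i, (β i : ℝ)) + d := by unfold wt; push_cast; ring
        rw [← this]; ring
      rw [e]
      have hxi : ∀ i, |x i| ≤ R := fun i => (PiLp.norm_apply_le x i).trans hx
      gcongr with i _
      · rw [tc_number]
        have b1 := h (creOp i (annOp i φ)) x hx β
        have b2 := h (annOp i φ) x hx β
        have b3 := h (creOp i φ) x hx β
        have b4 := h φ x hx β
        have hp : 0 ≤ wt β ^ k := by positivity
        have hsq : (x i) ^ 2 ≤ R ^ 2 := sq_le_sq' (by linarith [abs_le.1 (hxi i)])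
          (abs_le.1 (hxi i)).2
        calc wt β ^ k * |tc (creOp i (annOp i φ)) x β + x i / 2 * tc (annOp i φ) x β
              + x i / 2 * tc (creOp i φ) x β + (x i) ^ 2 / 4 * tc φ x β|
            ≤ wt β ^ k * (|tc (creOp i (annOp i φ)) x β| + |x i / 2 * tc (annOp i φ) x β|
              + |x i / 2 * tc (creOp i φ) x β| + |(x i) ^ 2 / 4 * tc φ x β|) := by
              gcongr
              exact (abs_add_le _ _).trans (add_le_add ((abs_add_le _ _).trans
                (add_le_add (abs_add_le _ _) le_rfl)) le_rfl)
          _ = wt β ^ k * |tc (creOp i (annOp i φ)) x β| +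
              |x i| / 2 * (wt β ^ k * |tc (annOp i φ) x β|)
              + |x i| / 2 * (wt β ^ k * |tc (creOp i φ) x β|)
              + (x i) ^ 2 / 4 * (wt β ^ k * |tc φ x β|) := by
              simp only [abs_mul, abs_div, abs_pow, sq_abs, abs_two]
              rw [abs_of_pos (show (0 : ℝ) < 4 by norm_num)]
              ring
          _ ≤ _ := by
              have := hC (creOp i (annOp i φ))
              have := hC (annOp i φ)
              have := hC (creOp i φ)
              have := hC φ
              have := hxi i
              gcongr
      · exact h φ x hx β

/-! ### Energy estimates in coefficient space -/

lemma summable_pi_prod (f : ℕ → ℝ) (hf : Summable f) (h0 : ∀ n, 0 ≤ f n) (d : ℕ) :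
    Summable (fun β : Fin d → ℕ => ∏ i, f (β i)) := by
  induction d with
  | zero => exact Summable.of_finite
  | succ d ih =>
    have h := hf.mul_of_nonneg ih h0 (fun β => Finset.prod_nonneg fun i _ => h0 _)
    rw [← (Fin.consEquiv (fun _ : Fin (d + 1) => ℕ)).summable_iff]
    refine h.congr fun p => ?_
    simp [Fin.prod_univ_succ, Fin.consEquiv]

lemma le_wt {d : ℕ} (β : Fin d → ℕ) (i : Fin d) : (β i : ℝ) + 1 ≤ wt β := by
  unfold wt
  have h1 : β i ≤ ∑ j, β j := Finset.single_le_sum (fun j _ => Nat.zero_le _) (Finset.mem_univ i)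
  have h2 : 1 ≤ d := by have := i.2; omega
  have : β i + 1 ≤ 2 * ∑ j, β j + d := by omega
  exact_mod_cast this

lemma one_le_wt {d : ℕ} (hd : 0 < d) (β : Fin d → ℕ) : 1 ≤ wt β := by
  have := le_wt β ⟨0, hd⟩
  have := Nat.cast_nonneg (α := ℝ) (β ⟨0, hd⟩)
  linarith

lemma wt_summable {d : ℕ} (_hd : 0 < d) : Summable (fun β : Fin d → ℕ => (wt β ^ (2 * d))⁻¹) := by
  have h1 : Summable (fun n : ℕ => (((n : ℝ) + 1) ^ 2)⁻¹) := by
    have := (summable_nat_add_iff 1).2 (Real.summable_nat_pow_inv.2 (one_lt_two))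
    refine this.congr fun n => ?_
    push_cast; rfl
  have h2 := summable_pi_prod _ h1 (fun n => by positivity) d
  refine h2.of_nonneg_of_le (fun β => by have := wt_nonneg β; positivity) fun β => ?_
  rw [Finset.prod_inv_distrib]
  apply inv_anti₀ (Finset.prod_pos fun i _ => by positivity)
  calc ∏ i, ((β i : ℝ) + 1) ^ 2 ≤ ∏ _i : Fin d, wt β ^ 2 := by
        refine Finset.prod_le_prod (fun i _ => by positivity) fun i _ => ?_
        have := le_wt β i
        gcongr
    _ = wt β ^ (2 * d) := by simp [← pow_mul]

/-- rapidly decreasing coefficient families -/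
def Rapid {d : ℕ} (u : (Fin d → ℕ) → ℝ) : Prop := ∀ k : ℕ, ∃ C : ℝ, 0 ≤ C ∧ ∀ β, wt β ^ k * |u β| ≤ C

noncomputable def sw {d : ℕ} (β : Fin d → ℕ) : ℝ := Real.sqrt (wt β)

lemma sw_sq {d : ℕ} (β : Fin d → ℕ) : sw β ^ 2 = wt β := Real.sq_sqrt (wt_nonneg β)

lemma sw_nonneg {d : ℕ} (β : Fin d → ℕ) : 0 ≤ sw β := Real.sqrt_nonneg _

lemma one_le_sw {d : ℕ} (hd : 0 < d) (β : Fin d → ℕ) : 1 ≤ sw β := by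
  unfold sw
  rw [Real.one_le_sqrt]
  exact one_le_wt hd β

lemma sw_le_wt {d : ℕ} (hd : 0 < d) (β : Fin d → ℕ) : sw β ≤ wt β := by
  rw [← sw_sq]; nlinarith [one_le_sw hd β]

lemma wt_le_of_bound {d : ℕ} (hd : 0 < d) (β : Fin d → ℕ) (p : ℕ) (a C : ℝ)
    (h : wt β ^ (p + 2 * d) * a ≤ C) : wt β ^ p * a ≤ C * (wt β ^ (2 * d))⁻¹ := by
  have hw : 0 < wt β := lt_of_lt_of_le one_pos (one_le_wt hd β)
  rw [← div_eq_mul_inv, le_div_iff₀ (by positivity)]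
  rw [pow_add] at h
  linarith

lemma Rapid.summable {d : ℕ} (hd : 0 < d) {u : (Fin d → ℕ) → ℝ} (hu : Rapid u)
    (g : (Fin d → ℕ) → ℝ) (p : ℕ) (D : ℝ) (hg : ∀ β, |g β| ≤ D * (wt β ^ p * |u β|)) :
    Summable g := by
  obtain ⟨C, hC, h⟩ := hu (p + 2 * d)
  refine Summable.of_norm_bounded (g := fun β => |D| * (C * (wt β ^ (2 * d))⁻¹))
    (((wt_summable hd).mul_left _).mul_left _) fun β => ?_
  have hw := wt_nonneg β
  refine (hg β).trans ?_
  calc D * (wt β ^ p * |u β|) ≤ |D| * (wt β ^ p * |u β|) :=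
        mul_le_mul_of_nonneg_right (le_abs_self D) (by positivity)
    _ ≤ _ := mul_le_mul_of_nonneg_left (wt_le_of_bound hd β p _ C (h β)) (abs_nonneg D)

lemma Rapid.bdd {d : ℕ} {u : (Fin d → ℕ) → ℝ} (hu : Rapid u) :
    ∃ C : ℝ, 0 ≤ C ∧ ∀ β, |u β| ≤ C := by
  obtain ⟨C, hC, h⟩ := hu 0
  exact ⟨C, hC, fun β => by simpa using h β⟩

lemma Rapid.summable_sq {d : ℕ} (hd : 0 < d) {u : (Fin d → ℕ) → ℝ} (hu : Rapid u) (m : ℕ) :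
    Summable (fun β => sw β ^ m * u β ^ 2) := by
  obtain ⟨C, hC, h⟩ := hu.bdd
  refine hu.summable hd _ m C fun β => ?_
  have h1 := sw_nonneg β
  have h2 := sw_le_wt hd β
  have h3 := wt_nonneg β
  rw [abs_mul, abs_of_nonneg (by positivity), abs_pow]
  calc sw β ^ m * |u β| ^ 2 ≤ wt β ^ m * (|u β| * C) := by
        rw [sq]; gcongr; exact h β
    _ = _ := by ring

lemma sqrt_le_wt {d : ℕ} (β : Fin d → ℕ) (i : Fin d) : Real.sqrt ((β i : ℝ) + 1) ≤ wt β := by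
  refine le_trans ?_ (le_wt β i)
  rw [Real.sqrt_le_left (by positivity)]
  nlinarith [Nat.cast_nonneg (α := ℝ) (β i)]

lemma sqrt_le_wt' {d : ℕ} (β : Fin d → ℕ) (i : Fin d) : Real.sqrt (β i : ℝ) ≤ wt β :=
  (Real.sqrt_le_sqrt (by linarith)).trans (sqrt_le_wt β i)

lemma term_bound {d : ℕ} (hd : 0 < d) (β : Fin d → ℕ) (m : ℕ) (s a b C : ℝ) (hs : 0 ≤ s)
    (hs' : s ≤ wt β) (hb : |b| ≤ C) :
    |sw β ^ m * s * a * b| ≤ C * (wt β ^ (m + 1) * |a|) := by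
  have h1 := sw_nonneg β
  have h2 := sw_le_wt hd β
  have h3 := wt_nonneg β
  rw [abs_mul, abs_mul, abs_of_nonneg (by positivity)]
  calc sw β ^ m * s * |a| * |b| ≤ wt β ^ m * wt β * |a| * C := by gcongr
    _ = _ := by ring

lemma wt_idxUp {d : ℕ} (β : Fin d → ℕ) (i : Fin d) : wt (idxUp β i) = wt β + 2 := by
  unfold wt idxUp
  have : ∑ j, Function.update β i (β i + 1) j = ∑ j, β j + 1 := by
    rw [Finset.sum_update_of_mem (Finset.mem_univ i),
      ← Finset.add_sum_erase _ _ (Finset.mem_univ i), Finset.sdiff_singleton_eq_erase]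
    ring
  rw [this]; push_cast; ring

lemma idxUp_injective {d : ℕ} (i : Fin d) :
    Function.Injective (fun β : Fin d → ℕ => idxUp β i) := by
  intro β γ h
  have := congrArg (fun β => idxDn β i) h
  simpa [idxDn_idxUp] using this

lemma pow_diff_le (a b : ℝ) (ha : 0 ≤ a) (hab : a ≤ b) (k : ℕ) :
    b ^ (k + 1) - a ^ (k + 1) ≤ (k + 1) * ((b - a) * b ^ k) := by
  induction k with
  | zero => simp
  | succ k ih =>
    have h1 : a ^ (k + 1) ≤ b ^ (k + 1) := by gcongr
    have hb : 0 ≤ b := ha.trans hab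
    have h2 := mul_le_mul_of_nonneg_left ih hb
    have h3 := mul_le_mul_of_nonneg_right h1 (sub_nonneg.2 hab)
    push_cast
    have e1 : b ^ (k + 1 + 1) = b * b ^ (k + 1) := by ring
    have e2 : a ^ (k + 1 + 1) = a * a ^ (k + 1) := by ring
    have e3 : b ^ (k + 1) = b * b ^ k := by ring
    rw [e1, e2]
    have e4 : b * ((k + 1) * ((b - a) * b ^ k)) = (k + 1) * ((b - a) * b ^ (k + 1)) := by
      rw [e3]; ring
    rw [e4] at h2
    linarith

noncomputable def Kc (k : ℕ) : ℝ := (k + 1) * (2 ^ k + 1)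

lemma Kc_nonneg (k : ℕ) : 0 ≤ Kc k := by unfold Kc; positivity

lemma diff_term_bound {d : ℕ} (hd : 0 < d) (β : Fin d → ℕ) (i : Fin d) (k : ℕ) (a b : ℝ) :
    |(sw (idxUp β i) ^ (k + 1) - sw β ^ (k + 1)) * Real.sqrt (β i + 1) * a * b| ≤
      (k + 1) * (2 ^ k * (sw β ^ k * a ^ 2) + sw (idxUp β i) ^ k * b ^ 2) := by
  have hA := sw_nonneg β
  have hB := sw_nonneg (idxUp β i)
  have hA1 := one_le_sw hd β
  have sA := sw_sq β
  have sB := sw_sq (idxUp β i)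
  rw [wt_idxUp] at sB
  set A := sw β with hAdef
  set B := sw (idxUp β i) with hBdef
  have hAB : A ≤ B := by nlinarith
  have hB2 : B ≤ 2 * A := by nlinarith
  have hs : Real.sqrt (β i + 1) ≤ B := by
    rw [← Real.sqrt_sq hB, sB]
    exact Real.sqrt_le_sqrt (by linarith [le_wt β i])
  have hs0 := Real.sqrt_nonneg ((β i : ℝ) + 1)
  set s := Real.sqrt (β i + 1)
  have h1 : (B ^ (k + 1) - A ^ (k + 1)) * s ≤ (k + 1) * (2 * B ^ k) := by
    have h2 := pow_diff_le A B hA hAB k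
    have h3 : (B - A) * s ≤ 2 := by nlinarith
    calc (B ^ (k + 1) - A ^ (k + 1)) * s ≤ ((k + 1) * ((B - A) * B ^ k)) * s := by gcongr
      _ = (k + 1) * (((B - A) * s) * B ^ k) := by ring
      _ ≤ _ := by gcongr
  have h0 : 0 ≤ (B ^ (k + 1) - A ^ (k + 1)) * s := by
    apply mul_nonneg _ hs0
    have : A ^ (k + 1) ≤ B ^ (k + 1) := by gcongr
    linarith
  rw [mul_assoc, abs_mul, abs_of_nonneg h0]
  have hab : 2 * |a * b| ≤ a ^ 2 + b ^ 2 := by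
    rw [abs_mul, ← sq_abs a, ← sq_abs b]; nlinarith [sq_nonneg (|a| - |b|)]
  have hBk : B ^ k ≤ 2 ^ k * A ^ k := by rw [← mul_pow]; gcongr
  calc (B ^ (k + 1) - A ^ (k + 1)) * s * |a * b| ≤ (k + 1) * (2 * B ^ k) * |a * b| := by gcongr
    _ = (k + 1) * (B ^ k * (2 * |a * b|)) := by ring
    _ ≤ (k + 1) * (B ^ k * (a ^ 2 + b ^ 2)) := by gcongr
    _ = (k + 1) * (B ^ k * a ^ 2 + B ^ k * b ^ 2) := by ring
    _ ≤ (k + 1) * ((2 ^ k * A ^ k) * a ^ 2 + B ^ k * b ^ 2) := by gcongr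
    _ = _ := by ring

noncomputable def energy {d : ℕ} (m : ℕ) (u : (Fin d → ℕ) → ℝ) : ℝ := ∑' β, sw β ^ m * u β ^ 2

lemma energy_nonneg {d : ℕ} (m : ℕ) (u : (Fin d → ℕ) → ℝ) : 0 ≤ energy m u :=
  tsum_nonneg fun β => by have := sw_nonneg β; positivity

lemma energy_mono {d : ℕ} (hd : 0 < d) {u : (Fin d → ℕ) → ℝ} (hu : Rapid u) (m : ℕ) :
    energy m u ≤ energy (m + 1) u := by
  refine Summable.tsum_le_tsum (fun β => ?_) (hu.summable_sq hd m) (hu.summable_sq hd (m + 1))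
  gcongr
  · exact one_le_sw hd β
  · omega

/-- derivative of the energy density along a translation in direction `x` -/
noncomputable def dens {d : ℕ} (m : ℕ) (u : (Fin d → ℕ) → ℝ) (x : EuclideanSpace ℝ (Fin d))
    (β : Fin d → ℕ) : ℝ :=
  sw β ^ m * (2 * u β * ∑ i, x i * ((Real.sqrt (β i) * u (idxDn β i)
        - Real.sqrt (β i + 1) * u (idxUp β i)) / 2))

lemma tsum_dens {d : ℕ} (hd : 0 < d) (m : ℕ) {u : (Fin d → ℕ) → ℝ} (hu : Rapid u)
    (x : EuclideanSpace ℝ (Fin d)) :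
    ∑' β, dens m u x β = ∑ i, x i * ∑' β, (sw (idxUp β i) ^ m - sw β ^ m) *
      Real.sqrt (β i + 1) * u β * u (idxUp β i) := by
  obtain ⟨C, hC, hb⟩ := hu.bdd
  have SA : ∀ i, Summable (fun β => sw β ^ m * Real.sqrt (β i) * u β * u (idxDn β i)) := fun i =>
    hu.summable hd _ (m + 1) C fun β =>
      term_bound hd β m _ _ _ C (Real.sqrt_nonneg _) (sqrt_le_wt' β i) (hb _)
  have SB : ∀ i, Summable (fun β => sw β ^ m * Real.sqrt (β i + 1) * u β * u (idxUp β i)) :=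
    fun i => hu.summable hd _ (m + 1) C fun β =>
      term_bound hd β m _ _ _ C (Real.sqrt_nonneg _) (sqrt_le_wt β i) (hb _)
  have e : ∀ β, dens m u x β = ∑ i, x i * (sw β ^ m * Real.sqrt (β i) * u β * u (idxDn β i)
      - sw β ^ m * Real.sqrt (β i + 1) * u β * u (idxUp β i)) := by
    intro β
    unfold dens
    rw [Finset.mul_sum, Finset.mul_sum]
    exact Finset.sum_congr rfl fun i _ => by ring
  simp_rw [e]
  rw [Summable.tsum_finsetSum fun i _ => ((SA i).sub (SB i)).mul_left (x i)]
  refine Finset.sum_congr rfl fun i _ => ?_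
  rw [tsum_mul_left, (SA i).tsum_sub (SB i)]
  congr 1
  have hsup : Function.support (fun β => sw β ^ m * Real.sqrt (β i) * u β * u (idxDn β i)) ⊆
      Set.range (fun β : Fin d → ℕ => idxUp β i) := by
    intro β hβ
    refine ⟨idxDn β i, idxUp_idxDn β i fun h => hβ ?_⟩
    simp [h]
  have inj := idxUp_injective i
  have SA' := (SA i).comp_injective inj
  rw [← inj.tsum_eq hsup]
  have e2 : ∀ β : Fin d → ℕ, ((idxUp β i i : ℕ) : ℝ) = β i + 1 := by
    intro β; unfold idxUp; simp
  simp only [Function.comp_def, e2, idxDn_idxUp] at SA' ⊢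
  rw [← SA'.tsum_sub (SB i)]
  congr 1; ext β; ring

lemma tsum_dens_zero {d : ℕ} (hd : 0 < d) {u : (Fin d → ℕ) → ℝ} (hu : Rapid u)
    (x : EuclideanSpace ℝ (Fin d)) : ∑' β, dens 0 u x β = 0 := by
  rw [tsum_dens hd 0 hu]; simp

lemma tsum_dens_succ {d : ℕ} (hd : 0 < d) (k : ℕ) {u : (Fin d → ℕ) → ℝ} (hu : Rapid u)
    (x : EuclideanSpace ℝ (Fin d)) :
    |∑' β, dens (k + 1) u x β| ≤ d * Kc k * ‖x‖ * energy k u := by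
  rw [tsum_dens hd (k + 1) hu]
  have key : ∀ i, |∑' β, (sw (idxUp β i) ^ (k + 1) - sw β ^ (k + 1)) *
      Real.sqrt (β i + 1) * u β * u (idxUp β i)| ≤ Kc k * energy k u := by
    intro i
    have S := hu.summable_sq hd k
    have S' := S.comp_injective (idxUp_injective i)
    simp only [Function.comp_def] at S'
    have S2 := ((S.mul_left (2 ^ k)).add S').mul_left ((k : ℝ) + 1)
    have b := tsum_of_norm_bounded S2.hasSum
      (fun β => by rw [Real.norm_eq_abs]; exact diff_term_bound hd β i k (u β) (u (idxUp β i)))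
    rw [Real.norm_eq_abs] at b
    refine b.trans ?_
    rw [tsum_mul_left, (S.mul_left (2 ^ k)).tsum_add S', tsum_mul_left]
    have h3 : ∑' β, sw (idxUp β i) ^ k * u (idxUp β i) ^ 2 ≤ energy k u :=
      tsum_comp_le_tsum_of_inj S (fun β => by have := sw_nonneg β; positivity)
        (idxUp_injective i)
    unfold Kc
    have : (∑' β, sw β ^ k * u β ^ 2) = energy k u := rfl
    rw [this]
    calc ((k : ℝ) + 1) * (2 ^ k * energy k u + ∑' β, sw (idxUp β i) ^ k * u (idxUp β i) ^ 2)
        ≤ (k + 1) * (2 ^ k * energy k u + energy k u) := by gcongr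
      _ = _ := by ring
  calc _ ≤ ∑ i, |x i * ∑' β, (sw (idxUp β i) ^ (k + 1) - sw β ^ (k + 1)) *
      Real.sqrt (β i + 1) * u β * u (idxUp β i)| := Finset.abs_sum_le_sum_abs _ _
    _ ≤ ∑ _i : Fin d, ‖x‖ * (Kc k * energy k u) := by
      refine Finset.sum_le_sum fun i _ => ?_
      rw [abs_mul]
      exact mul_le_mul (PiLp.norm_apply_le x i) (key i) (abs_nonneg _) (norm_nonneg _)
    _ = _ := by simp; ring

lemma tc_rapid {d : ℕ} (φ : SchwartzMap (EuclideanSpace ℝ (Fin d)) ℝ)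
    (x : EuclideanSpace ℝ (Fin d)) : Rapid (tc φ x) := by
  intro k
  obtain ⟨C, hC, h⟩ := tc_decay ‖x‖ (norm_nonneg x) k φ
  exact ⟨C, hC, h x le_rfl⟩

lemma energy_hasDerivAt {d : ℕ} (hd : 0 < d) (m : ℕ)
    (φ : SchwartzMap (EuclideanSpace ℝ (Fin d)) ℝ) (x : EuclideanSpace ℝ (Fin d)) (t : ℝ)
    (ht : t ∈ Set.Ioo (-1 : ℝ) 2) :
    HasDerivAt (fun t : ℝ => energy m (tc φ (t • x))) (∑' β, dens m (tc φ (t • x)) x β) t := by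
  obtain ⟨C, hC, h⟩ := tc_decay (2 * ‖x‖) (by positivity) (m + 1 + 2 * d) φ
  obtain ⟨D, hD, h0⟩ := tc_decay (2 * ‖x‖) (by positivity) 0 φ
  have hn : ∀ s ∈ Set.Ioo (-1 : ℝ) 2, ‖s • x‖ ≤ 2 * ‖x‖ := by
    intro s hs
    rw [norm_smul, Real.norm_eq_abs]
    have : |s| ≤ 2 := abs_le.2 ⟨by linarith [hs.1], hs.2.le⟩
    gcongr
  unfold energy
  refine hasDerivAt_tsum_of_isPreconnected (𝕜 := ℝ) (y₀ := t) (t := Set.Ioo (-1 : ℝ) 2)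
    (g := fun (β : Fin d → ℕ) (s : ℝ) => sw β ^ m * tc φ (s • x) β ^ 2)
    (g' := fun (β : Fin d → ℕ) (s : ℝ) => dens m (tc φ (s • x)) x β)
    (u := fun β : Fin d → ℕ => (∑ i, |x i| * (2 * D)) * (C * (wt β ^ (2 * d))⁻¹))
    (((wt_summable hd).mul_left _).mul_left _) isOpen_Ioo isPreconnected_Ioo
    (fun β s _ => ?_) (fun β s hs => ?_) ht ((tc_rapid φ (t • x)).summable_sq hd m) ht
  · have := ((tc_hasDerivAt φ x β s).pow 2).const_mul (sw β ^ m)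
    refine this.congr_deriv ?_
    unfold dens
    simp
  · have hb : ∀ γ, |tc φ (s • x) γ| ≤ D := fun γ => by simpa using h0 (s • x) (hn s hs) γ
    have hk := wt_le_of_bound hd β (m + 1) _ C (h (s • x) (hn s hs) β)
    have e : dens m (tc φ (s • x)) x β = ∑ i, x i *
        (sw β ^ m * Real.sqrt (β i) * tc φ (s • x) β * tc φ (s • x) (idxDn β i)
        - sw β ^ m * Real.sqrt (β i + 1) * tc φ (s • x) β * tc φ (s • x) (idxUp β i)) := by
      unfold dens
      rw [Finset.mul_sum, Finset.mul_sum]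
      exact Finset.sum_congr rfl fun i _ => by ring
    rw [Real.norm_eq_abs, e, Finset.sum_mul]
    refine (Finset.abs_sum_le_sum_abs _ _).trans (Finset.sum_le_sum fun i _ => ?_)
    rw [abs_mul, mul_assoc |x i|]
    refine mul_le_mul_of_nonneg_left ?_ (abs_nonneg (x i))
    refine (abs_sub _ _).trans ?_
    have t1 := term_bound hd β m (Real.sqrt (β i)) (tc φ (s • x) β) (tc φ (s • x) (idxDn β i)) D
      (Real.sqrt_nonneg _) (sqrt_le_wt' β i) (hb _)
    have t2 := term_bound hd β m (Real.sqrt (β i + 1)) (tc φ (s • x) β) (tc φ (s • x) (idxUp β i))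
      D (Real.sqrt_nonneg _) (sqrt_le_wt β i) (hb _)
    have t3 := mul_le_mul_of_nonneg_left hk hD
    linarith

/-- the polynomial bounding the growth of the `m`-th energy under translation -/
noncomputable def growPoly (d : ℕ) : ℕ → Polynomial ℝ
  | 0 => 1
  | k + 1 => 1 + Polynomial.C ((d : ℝ) * Kc k) * (Polynomial.X * growPoly d k)

lemma growPoly_coeff (d m : ℕ) : ∀ k, 0 ≤ (growPoly d m).coeff k := by
  induction m with
  | zero =>
    intro k
    simp only [growPoly, Polynomial.coeff_one]
    split_ifs <;> norm_num
  | succ m ih =>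
    intro k
    simp only [growPoly, Polynomial.coeff_add, Polynomial.coeff_C_mul, Polynomial.coeff_one]
    have h1 : 0 ≤ (Polynomial.X * growPoly d m).coeff k := by
      cases k with
      | zero => simp
      | succ k => rw [Polynomial.coeff_X_mul]; exact ih k
    have h2 := Kc_nonneg m
    have h3 : (0 : ℝ) ≤ if k = 0 then 1 else 0 := by split_ifs <;> norm_num
    positivity

lemma one_le_growPoly (d m : ℕ) (r : ℝ) (hr : 0 ≤ r) : 1 ≤ (growPoly d m).eval r := by
  induction m with
  | zero => simp [growPoly]
  | succ m ih =>
    simp only [growPoly, Polynomial.eval_add, Polynomial.eval_mul, Polynomial.eval_one,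
      Polynomial.eval_C, Polynomial.eval_X]
    have h2 := Kc_nonneg m
    have : 0 ≤ (growPoly d m).eval r := by linarith
    have : 0 ≤ (d : ℝ) * Kc m * (r * (growPoly d m).eval r) := by positivity
    linarith

lemma energy_bound {d : ℕ} (hd : 0 < d) (φ : SchwartzMap (EuclideanSpace ℝ (Fin d)) ℝ)
    (x : EuclideanSpace ℝ (Fin d)) (m : ℕ) :
    ∀ t ∈ Set.Icc (0 : ℝ) 1, energy m (tc φ (t • x)) ≤
      (growPoly d m).eval ‖x‖ * energy m (tc φ 0) := by
  have sub : ∀ t ∈ Set.Icc (0 : ℝ) 1, t ∈ Set.Ioo (-1 : ℝ) 2 := fun t ht =>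
    ⟨by linarith [ht.1], by linarith [ht.2]⟩
  -- mean value inequality
  have mv : ∀ (m : ℕ) (B : ℝ), 0 ≤ B →
      (∀ t ∈ Set.Icc (0 : ℝ) 1, |∑' β, dens m (tc φ (t • x)) x β| ≤ B) →
      ∀ t ∈ Set.Icc (0 : ℝ) 1, energy m (tc φ (t • x)) ≤ energy m (tc φ 0) + B := by
    intro m B hB hb t ht
    have := (convex_Icc (0 : ℝ) 1).norm_image_sub_le_of_norm_hasDerivWithin_le
      (f := fun t : ℝ => energy m (tc φ (t • x)))
      (fun s hs => (energy_hasDerivAt hd m φ x s (sub s hs)).hasDerivWithinAt)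
      (fun s hs => by rw [Real.norm_eq_abs]; exact hb s hs)
      (Set.left_mem_Icc.2 zero_le_one) ht
    simp only [zero_smul, sub_zero, Real.norm_eq_abs] at this
    have h1 := (le_abs_self _).trans this
    rw [abs_of_nonneg ht.1] at h1
    nlinarith [ht.2]
  induction m with
  | zero =>
    intro t ht
    have := mv 0 0 le_rfl (fun s _ => by rw [tsum_dens_zero hd (tc_rapid φ _)]; simp) t ht
    simpa [growPoly] using this
  | succ m ih =>
    intro t ht
    have hK := Kc_nonneg m
    have hE := energy_nonneg m (tc φ 0)
    have hE1 := energy_mono hd (tc_rapid φ 0) m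
    have hp : 0 ≤ (growPoly d m).eval ‖x‖ := by
      linarith [one_le_growPoly d m ‖x‖ (norm_nonneg x)]
    have := mv (m + 1)
      (d * Kc m * ‖x‖ * ((growPoly d m).eval ‖x‖ * energy (m + 1) (tc φ 0)))
      (by have := hE.trans hE1; positivity) (fun s hs => by
        refine (tsum_dens_succ hd m (tc_rapid φ _) x).trans ?_
        gcongr
        refine (ih s hs).trans ?_
        gcongr) t ht
    refine this.trans (le_of_eq ?_)
    simp only [growPoly, Polynomial.eval_add, Polynomial.eval_mul, Polynomial.eval_one,
      Polynomial.eval_C, Polynomial.eval_X]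
    ring

lemma energy_translate {d : ℕ} (hd : 0 < d) (φ : SchwartzMap (EuclideanSpace ℝ (Fin d)) ℝ)
    (x : EuclideanSpace ℝ (Fin d)) (m : ℕ) :
    energy m (tc φ x) ≤ (growPoly d m).eval ‖x‖ * energy m (tc φ 0) := by
  simpa using energy_bound hd φ x m 1 (Set.right_mem_Icc.2 zero_le_one)

/-! ### Conclusion -/

lemma poly_moment_integrable {Ω E : Type} [MeasurableSpace Ω] [NormedAddCommGroup E] (μ : Measure Ω)
    (X : Ω → E) (hm : ∀ k : ℕ, Integrable (fun ω => ‖X ω‖ ^ k) μ) (P : Polynomial ℝ) :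
    Integrable (fun ω => P.eval ‖X ω‖) μ := by
  simp_rw [Polynomial.eval_eq_sum_range]
  exact integrable_finsetSum _ fun k _ => (hm k).const_mul _

lemma prod_integrable {d : ℕ} {Ω : Type} [MeasurableSpace Ω] (μ : Measure Ω)
    [IsProbabilityMeasure μ] (X : Ω → EuclideanSpace ℝ (Fin d)) (hX : Measurable X)
    (φ : SchwartzMap (EuclideanSpace ℝ (Fin d)) ℝ) (β : Fin d → ℕ) :
    Integrable (fun p : EuclideanSpace ℝ (Fin d) × Ω =>
      φ (p.1 - X p.2) * hermiteFunMulti d β p.1) (volume.prod μ) := by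
  have m1 : Measurable (fun p : EuclideanSpace ℝ (Fin d) × Ω =>
      φ (p.1 - X p.2) * hermiteFunMulti d β p.1) := by
    have h1 := φ.continuous.measurable
    have h2 := (hermiteFunMulti_continuous β).measurable
    exact (h1.comp (measurable_fst.sub (hX.comp measurable_snd))).mul (h2.comp measurable_fst)
  have hm := m1.aestronglyMeasurable (μ := volume.prod μ)
  obtain ⟨C, hC, h⟩ := hermiteFunMulti_bdd β
  have hi : ∀ x, Integrable (fun y => φ (y - x)) := fun x =>
    (φ.integrable (μ := volume)).comp_sub_right x
  have hi2 : ∀ x, Integrable (fun y => φ (y - x) * hermiteFunMulti d β y) := fun x =>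
    (hi x).mul_bdd (c := C) (hermiteFunMulti_continuous β).aestronglyMeasurable
      (ae_of_all _ h)
  rw [integrable_prod_iff' hm]
  refine ⟨ae_of_all _ fun ω => hi2 (X ω), ?_⟩
  refine Integrable.of_bound (C := (∫ y, ‖φ y‖) * C) hm.norm.prod_swap.integral_prod_right'
    (ae_of_all _ fun ω => ?_)
  rw [Real.norm_eq_abs, abs_of_nonneg (integral_nonneg fun y => norm_nonneg _)]
  calc ∫ y, ‖φ (y - X ω) * hermiteFunMulti d β y‖ ≤ ∫ y, ‖φ (y - X ω)‖ * C := by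
        refine integral_mono (hi2 (X ω)).norm ((hi (X ω)).norm.mul_const C) fun y => ?_
        simp only
        rw [norm_mul]
        gcongr
        exact h y
    _ = _ := by
        rw [integral_mul_const, integral_sub_right_eq_self (fun y => ‖φ y‖) (X ω)]

lemma coeff_avg {d : ℕ} {Ω : Type} [MeasurableSpace Ω] (μ : Measure Ω)
    [IsProbabilityMeasure μ] (X : Ω → EuclideanSpace ℝ (Fin d)) (hX : Measurable X)
    (φ : SchwartzMap (EuclideanSpace ℝ (Fin d)) ℝ) (β : Fin d → ℕ) :
    Integrable (fun ω => tc φ (X ω) β) μ ∧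
      hermCoeff d (fun y => ∫ ω, φ (y - X ω) ∂μ) β = ∫ ω, tc φ (X ω) β ∂μ := by
  have hi := prod_integrable μ X hX φ β
  constructor
  · refine hi.integral_prod_right.congr (ae_of_all _ fun ω => ?_)
    exact hermCoeff_translate φ (X ω) β
  · have e : ∀ ω, tc φ (X ω) β = ∫ y, φ (y - X ω) * hermiteFunMulti d β y := fun ω =>
      (hermCoeff_translate φ (X ω) β).symm
    simp_rw [e]
    unfold hermCoeff
    simp_rw [← integral_mul_const]
    exact integral_integral_swap hi

lemma hermNorm_bound {d : ℕ} (hd : 0 < d) (n : ℕ) {Ω : Type} [MeasurableSpace Ω] (μ : Measure Ω)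
    [IsProbabilityMeasure μ] (X : Ω → EuclideanSpace ℝ (Fin d)) (hX : Measurable X)
    (hm : ∀ k : ℕ, Integrable (fun ω => ‖X ω‖ ^ k) μ)
    (φ : SchwartzMap (EuclideanSpace ℝ (Fin d)) ℝ) :
    hermNorm d n (fun y => ∫ ω, φ (y - X ω) ∂μ) ≤
      (∫ ω, (growPoly d (4 * n)).eval ‖X ω‖ ∂μ) * hermNorm d n (fun z => φ z) := by
  set P := growPoly d (4 * n) with hP
  have hPi := poly_moment_integrable μ X hm P
  have hP1 : 1 ≤ ∫ ω, P.eval ‖X ω‖ ∂μ := by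
    have := integral_mono (μ := μ) (integrable_const (1 : ℝ)) hPi
      (fun ω => one_le_growPoly d (4 * n) ‖X ω‖ (norm_nonneg _))
    simpa using this
  set EP := ∫ ω, P.eval ‖X ω‖ ∂μ with hEP
  have hsw : ∀ β : Fin d → ℕ, (((2 * ∑ i, β i) + d : ℕ) : ℝ) ^ (2 * n) = sw β ^ (4 * n) := by
    intro β
    rw [show 4 * n = 2 * (2 * n) by ring, pow_mul (sw β), sw_sq]; rfl
  have e0 : ∀ β, hermCoeff d (fun z => φ z) β = tc φ 0 β := by
    intro β
    rw [← hermCoeff_translate]; simp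
  unfold hermNorm
  simp_rw [hsw, e0, fun β => (coeff_avg μ X hX φ β).2]
  change Real.sqrt _ ≤ EP * Real.sqrt (energy (4 * n) (tc φ 0))
  have main : ∑' β, sw β ^ (4 * n) * (∫ ω, tc φ (X ω) β ∂μ) ^ 2 ≤
      EP * energy (4 * n) (tc φ 0) := by
    refine Real.tsum_le_of_sum_le (fun β => by have := sw_nonneg β; positivity) fun S => ?_
    have hi : ∀ β, Integrable (fun ω => tc φ (X ω) β) μ := fun β => (coeff_avg μ X hX φ β).1
    have hi2 : ∀ β, Integrable (fun ω => tc φ (X ω) β ^ 2) μ := fun β => by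
      have := (hi β).mul_bdd (hi β).1 (ae_of_all _ fun ω => tc_base φ (X ω) β)
      exact this.congr (ae_of_all _ fun ω => (sq _).symm)
    have jensen : ∀ β, (∫ ω, tc φ (X ω) β ∂μ) ^ 2 ≤ ∫ ω, tc φ (X ω) β ^ 2 ∂μ := fun β =>
      (even_two.convexOn_pow (𝕜 := ℝ)).map_integral_le (continuous_pow 2).continuousOn isClosed_univ
        (ae_of_all _ fun _ => Set.mem_univ _) (hi β) (hi2 β)
    calc ∑ β ∈ S, sw β ^ (4 * n) * (∫ ω, tc φ (X ω) β ∂μ) ^ 2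
        ≤ ∑ β ∈ S, sw β ^ (4 * n) * ∫ ω, tc φ (X ω) β ^ 2 ∂μ := by
          refine Finset.sum_le_sum fun β _ => ?_
          have := sw_nonneg β
          exact mul_le_mul_of_nonneg_left (jensen β) (by positivity)
      _ = ∫ ω, ∑ β ∈ S, sw β ^ (4 * n) * tc φ (X ω) β ^ 2 ∂μ := by
          rw [integral_finsetSum _ fun β _ => (hi2 β).const_mul _]
          simp_rw [integral_const_mul]
      _ ≤ ∫ ω, P.eval ‖X ω‖ * energy (4 * n) (tc φ 0) ∂μ := by
          refine integral_mono (integrable_finsetSum _ fun β _ => (hi2 β).const_mul _)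
            (hPi.mul_const _) fun ω => ?_
          refine le_trans ?_ (energy_translate hd φ (X ω) (4 * n))
          exact ((tc_rapid φ (X ω)).summable_sq hd (4 * n)).sum_le_tsum S
            fun β _ => by have := sw_nonneg β; positivity
      _ = _ := by rw [integral_mul_const]
  calc Real.sqrt _ ≤ Real.sqrt (EP * energy (4 * n) (tc φ 0)) := Real.sqrt_le_sqrt main
    _ = Real.sqrt EP * Real.sqrt (energy (4 * n) (tc φ 0)) := Real.sqrt_mul (by linarith) _
    _ ≤ _ := by
      gcongr
      rw [Real.sqrt_le_left (by linarith)]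
      nlinarith

/-- If `X` is a random variable with all moments finite and `φ` is Schwartz,
then `ψ(y) = 𝔼(φ(y - X))` is again Schwartz, and for every `n` there is a
polynomial `P_n` with nonnegative coefficients, independent of `φ` and `X`,
with `|ψ|_n ≤ 𝔼(P_n(|X|)) |φ|_n`. -/
theorem expectation_translate_schwartz (d n : ℕ) :
    ∃ P : Polynomial ℝ, (∀ k, 0 ≤ P.coeff k) ∧
      ∀ (Ω : Type) (_ : MeasurableSpace Ω) (μ : Measure Ω)
        (_ : IsProbabilityMeasure μ) (X : Ω → EuclideanSpace ℝ (Fin d)),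
        Measurable X →
        (∀ k : ℕ, Integrable (fun ω => ‖X ω‖ ^ k) μ) →
        ∀ φ : SchwartzMap (EuclideanSpace ℝ (Fin d)) ℝ,
          (∃ Ψ : SchwartzMap (EuclideanSpace ℝ (Fin d)) ℝ,
              ∀ y, Ψ y = ∫ ω, φ (y - X ω) ∂μ) ∧
          hermNorm d n (fun y => ∫ ω, φ (y - X ω) ∂μ) ≤
            (∫ ω, P.eval ‖X ω‖ ∂μ) * hermNorm d n (fun z => φ z) := by
  rcases Nat.eq_zero_or_pos d with rfl | hd
  · refine ⟨1, fun k => ?_, ?_⟩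
    · rw [Polynomial.coeff_one]
      split_ifs <;> norm_num
    · intro Ω _ μ _ X hX hm φ
      refine ⟨schwartz_avg_exists μ X hX hm φ, ?_⟩
      have e : ∀ y ω, φ (y - X ω) = φ y := fun y ω => congrArg φ (Subsingleton.elim _ _)
      simp [e]
  · refine ⟨growPoly d (4 * n), growPoly_coeff d (4 * n), ?_⟩
    intro Ω _ μ _ X hX hm φ
    exact ⟨schwartz_avg_exists μ X hX hm φ, hermNorm_bound hd n μ X hX hm φ⟩
end
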